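/- Let f : A → B be a continuous map of topological spaces, where B is a finite simplicial complex and every homotopy fiber of f is homotopy equivalent to a finite simplicial complex. Then there exist a compact ENR E, a homotopy equivalence φ : A → E, and an approximate fibration p : E → B with p ∘ φ = f. -/

import Mathlib

noncomputable section

open unitInterval

/-- A map `p : E → B` is a (Hurewicz) fibration if it is continuous and has the homotopy
lifting property with respect to every topological space. -/
def IsHurewiczFibration {E B : Type} [TopologicalSpace E] [TopologicalSpace B]
    (p : E → B) : Prop :=
  Continuous p ∧
  ∀ (X : Type) [TopologicalSpace X] (f : C(X, E)) (h : C(X × I, B)),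
    (∀ x : X, h (x, 0) = p (f x)) →
    ∃ H : C(X × I, E), (∀ x : X, H (x, 0) = f x) ∧ (∀ z : X × I, p (H z) = h z)

/-- A map `p : E → B` is an approximate fibration if it is continuous and, for every space `X`,
every partial lift and every open cover `𝒰` of `B`, there is a lift of the homotopy which
commutes with the given homotopy "up to `𝒰`". -/
def IsApproxFibration {E B : Type} [TopologicalSpace E] [TopologicalSpace B]
    (p : E → B) : Prop :=
  Continuous p ∧
  ∀ (X : Type) [TopologicalSpace X] (f : C(X, E)) (h : C(X × I, B)),
    (∀ x : X, h (x, 0) = p (f x)) →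
    ∀ 𝒰 : Set (Set B), (∀ U ∈ 𝒰, IsOpen U) → (⋃₀ 𝒰 = Set.univ) →
    ∃ H : C(X × I, E), (∀ x : X, H (x, 0) = f x) ∧
      (∀ z : X × I, ∃ U ∈ 𝒰, p (H z) ∈ U ∧ h z ∈ U)

/-- A topological space is a Euclidean neighborhood retract: it is homeomorphic to a subspace
`X'` of some `ℝⁿ` which is a retract of an open neighborhood `U` of `X'` in `ℝⁿ`. -/
def IsENR (X : Type) [TopologicalSpace X] : Prop :=
  ∃ (n : ℕ) (X' : Set (Fin n → ℝ)), Nonempty (X ≃ₜ X') ∧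
    ∃ U : Set (Fin n → ℝ), IsOpen U ∧ X' ⊆ U ∧
      ∃ r : C(U, X'), ∀ (x : U) (hx : (x : Fin n → ℝ) ∈ X'), r x = ⟨(x : Fin n → ℝ), hx⟩

/-- A space is (homeomorphic to) the polyhedron of a finite geometric simplicial complex
in some Euclidean space. -/
def IsFiniteSimplicialComplex (B : Type) [TopologicalSpace B] : Prop :=
  ∃ (n : ℕ) (K : Geometry.SimplicialComplex ℝ (Fin n → ℝ)),
    K.faces.Finite ∧ Nonempty (B ≃ₜ K.space)

/-- `X` is homotopy equivalent to (the polyhedron of) a finite simplicial complex. -/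
def HomotopyEquivToFiniteComplex (X : Type) [TopologicalSpace X] : Prop :=
  ∃ (n : ℕ) (K : Geometry.SimplicialComplex ℝ (Fin n → ℝ)),
    K.faces.Finite ∧ Nonempty (ContinuousMap.HomotopyEquiv X K.space)

/-- The homotopy fiber of `f : A → B` over `b`: pairs `(a, γ)` of a point of `A` and a path
`γ : [0,1] → B` (with the compact-open topology) with `γ(0) = f(a)` and `γ(1) = b`. -/
def HomotopyFiber {A B : Type} [TopologicalSpace A] [TopologicalSpace B]
    (f : A → B) (b : B) : Type :=
  {z : A × C(I, B) // z.2 0 = f z.1 ∧ z.2 1 = b}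

instance {A B : Type} [TopologicalSpace A] [TopologicalSpace B] (f : A → B) (b : B) :
    TopologicalSpace (HomotopyFiber f b) :=
  instTopologicalSpaceSubtype

/-!
The mapping path fibration of `f` is a Hurewicz fibration over `B` whose fibers, the homotopy
fibers of `f`, are homotopy equivalent to finite complexes, and `f` factors through it by a
homotopy equivalence. So it suffices to replace a fibration over a finite complex, up to fiber
homotopy equivalence, by a map from a compact ENR.

Over a small ball the fibration is fiber homotopy trivial. A compact model is therefore built by
adding one ball at a time: on the overlap, the trivial piece maps to the model already constructed,
and the new model is the fiberwise double mapping cylinder of this map and the inclusion of the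
overlap into the ball, realized as a compact subset of a Euclidean space. It is an ENR because it
is a finite union of ENRs with ENR intersections, and a local-to-global principle (Dold) shows
that it is still fiber homotopy equivalent to the fibration. Finally, a map fiber homotopy
equivalent to a fibration over a compact metrizable base is an approximate fibration: homotopies can
be lifted in the fibration, transported, and corrected near time `0`
at arbitrarily small cost in `B`.
-/

universe u

/-- The retraction of `ℝ` onto the unit interval; it lets formulas whose values lie in `[0,1]`
on part of their domain be written as globally continuous maps. -/
def clamp : C(ℝ, I) := ⟨Set.projIcc 0 1 zero_le_one, continuous_projIcc⟩

theorem clamp_of_le_zero {r : ℝ} (h : r ≤ 0) : clamp r = 0 := Set.projIcc_of_le_left zero_le_one h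

theorem clamp_of_one_le {r : ℝ} (h : 1 ≤ r) : clamp r = 1 := Set.projIcc_of_right_le zero_le_one h

@[simp]
theorem clamp_zero : clamp 0 = 0 := clamp_of_le_zero le_rfl

@[simp]
theorem clamp_one : clamp 1 = 1 := clamp_of_one_le le_rfl

theorem coe_clamp {r : ℝ} (h : r ∈ I) : (clamp r : ℝ) = r :=
  congrArg Subtype.val (Set.projIcc_of_mem zero_le_one h)

@[simp]
theorem clamp_coe (t : I) : clamp t = t := Subtype.ext (coe_clamp t.2)

section Gluing

variable {X Y : Type*} [TopologicalSpace X] [TopologicalSpace Y]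

/-- The continuous map glued from maps on the closed sets `{x | P x}` and `{x | Q x}`, which cover
`X`. -/
def glueClosed {P Q : X → Prop} (hP : IsClosed {x | P x}) (hQ : IsClosed {x | Q x})
    (cover : ∀ x, P x ∨ Q x) (f : C({x // P x}, Y)) (g : C({x // Q x}, Y))
    (agree : ∀ x hp hq, f ⟨x, hp⟩ = g ⟨x, hq⟩) : C(X, Y) := by
  classical
  let F : X → Y := fun x => if h : P x then f ⟨x, h⟩ else g ⟨x, (cover x).resolve_left h⟩
  have restrict_P : {x | P x}.domRestrict F = f := by ext x; exact dif_pos x.2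
  have restrict_Q : {x | Q x}.domRestrict F = g := by
    ext x
    by_cases h : P x
    · exact (dif_pos h).trans (agree x h x.2)
    · exact dif_neg h
  refine ⟨F, ?_⟩
  have union_eq : {x | P x} ∪ {x | Q x} = Set.univ := Set.eq_univ_of_forall cover
  rw [← continuousOn_univ, ← union_eq]
  exact ContinuousOn.union_of_isClosed
    (continuousOn_iff_continuous_domRestrict.2 (restrict_P ▸ f.continuous))
    (continuousOn_iff_continuous_domRestrict.2 (restrict_Q ▸ g.continuous)) hP hQ

variable {P Q : X → Prop} {hP : IsClosed {x | P x}} {hQ : IsClosed {x | Q x}}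
  {cover : ∀ x, P x ∨ Q x} {f : C({x // P x}, Y)} {g : C({x // Q x}, Y)}
  {agree : ∀ x hp hq, f ⟨x, hp⟩ = g ⟨x, hq⟩}

theorem glueClosed_left {x : X} (h : P x) :
    glueClosed hP hQ cover f g agree x = f ⟨x, h⟩ := dif_pos h

theorem glueClosed_right {x : X} (h : Q x) : glueClosed hP hQ cover f g agree x = g ⟨x, h⟩ := by
  by_cases hp : P x
  · rw [glueClosed_left hp, agree]
  · exact dif_neg hp

/-- The continuous map glued from maps on `{x | a x ≤ b x}` and `{x | b x ≤ a x}`. -/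
def glueLE (a b : C(X, ℝ)) (f : C({x // a x ≤ b x}, Y)) (g : C({x // b x ≤ a x}, Y))
    (agree : ∀ x (h : a x = b x), f ⟨x, h.le⟩ = g ⟨x, h.ge⟩) : C(X, Y) :=
  glueClosed (isClosed_le a.continuous b.continuous) (isClosed_le b.continuous a.continuous)
    (fun x => le_total (a x) (b x)) f g fun x hp hq => agree x (le_antisymm hp hq)

variable {a b : C(X, ℝ)} {f : C({x // a x ≤ b x}, Y)} {g : C({x // b x ≤ a x}, Y)}
  {agree : ∀ x (h : a x = b x), f ⟨x, h.le⟩ = g ⟨x, h.ge⟩}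

theorem glueLE_left {x : X} (h : a x ≤ b x) : glueLE a b f g agree x = f ⟨x, h⟩ :=
  glueClosed_left (P := fun x => a x ≤ b x) h

theorem glueLE_right {x : X} (h : b x ≤ a x) : glueLE a b f g agree x = g ⟨x, h⟩ :=
  glueClosed_right (Q := fun x => b x ≤ a x) h

end Gluing

section FiberwiseHomotopy

variable {X Y T Z : Type*} [TopologicalSpace X] [TopologicalSpace Y] [TopologicalSpace T]

/-- The stage at time `t` of a homotopy. -/
def stage (H : C(X × I, Y)) (t : I) : C(X, Y) := H.comp ((ContinuousMap.id X).prodMk (.const X t))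

@[simp]
theorem stage_apply (H : C(X × I, Y)) (t : I) (x : X) : stage H t x = H (x, t) := rfl

/-- `f` and `g` are homotopic by a homotopy along which the value of `c : Y → Z` is constant. -/
def FiberwiseHomotopic (c : Y → Z) (f g : C(X, Y)) : Prop :=
  ∃ K : C(X × I, Y), (∀ x, K (x, 0) = f x) ∧ (∀ x, K (x, 1) = g x) ∧
    ∀ x t, c (K (x, t)) = c (f x)

namespace FiberwiseHomotopic

variable {c : Y → Z} {c' : T → Z} {f g k : C(X, Y)}

theorem refl (c : Y → Z) (f : C(X, Y)) : FiberwiseHomotopic c f f :=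
  ⟨f.comp ContinuousMap.fst, fun _ => rfl, fun _ => rfl, fun _ _ => rfl⟩

theorem of_eq (h : ∀ x, f x = g x) : FiberwiseHomotopic c f g :=
  ContinuousMap.ext h ▸ refl c f

theorem of_homotopy (K : C(X × I, Y)) (h : ∀ x t, c (K (x, t)) = c (K (x, 0))) :
    FiberwiseHomotopic c (stage K 0) (stage K 1) :=
  ⟨K, fun _ => rfl, fun _ => rfl, h⟩

theorem map_eq (h : FiberwiseHomotopic c f g) (x : X) : c (g x) = c (f x) := by
  obtain ⟨K, -, hK1, hKc⟩ := h
  rw [← hK1, hKc]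

theorem symm (h : FiberwiseHomotopic c f g) : FiberwiseHomotopic c g f := by
  have c_eq := h.map_eq
  obtain ⟨K, hK0, hK1, hKc⟩ := h
  exact ⟨K.comp ⟨fun z => (z.1, σ z.2), by fun_prop⟩, fun x => by simp [hK1],
    fun x => by simp [hK0], fun x t => by simp [hKc, c_eq]⟩

theorem trans (h : FiberwiseHomotopic c f g) (h' : FiberwiseHomotopic c g k) :
    FiberwiseHomotopic c f k := by
  have c_eq := h.map_eq
  obtain ⟨K, hK0, hK1, hKc⟩ := h
  obtain ⟨K', hK'0, hK'1, hK'c⟩ := h'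
  let H : f.Homotopy g := ⟨K.comp ContinuousMap.prodSwap, hK0, hK1⟩
  let H' : g.Homotopy k := ⟨K'.comp ContinuousMap.prodSwap, hK'0, hK'1⟩
  refine ⟨(H.trans H').toContinuousMap.comp ContinuousMap.prodSwap, fun x => by simp,
    fun x => by simp, fun x t => ?_⟩
  change c (H.trans H' (t, x)) = _
  rw [ContinuousMap.Homotopy.trans_apply]
  split_ifs
  · exact hKc _ _
  · exact (hK'c _ _).trans (c_eq x)

theorem comp_left (h : FiberwiseHomotopic c f g) (φ : C(Y, T)) (hφ : ∀ y, c' (φ y) = c y) :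
    FiberwiseHomotopic c' (φ.comp f) (φ.comp g) := by
  obtain ⟨K, hK0, hK1, hKc⟩ := h
  exact ⟨φ.comp K, fun x => by simp [hK0], fun x => by simp [hK1],
    fun x t => by simp [hφ, hKc]⟩

theorem comp_right (h : FiberwiseHomotopic c f g) (φ : C(T, X)) :
    FiberwiseHomotopic c (f.comp φ) (g.comp φ) := by
  obtain ⟨K, hK0, hK1, hKc⟩ := h
  exact ⟨K.comp (φ.prodMap (.id I)), fun x => by simp [hK0], fun x => by simp [hK1],
    fun x t => by simp [hKc]⟩

theorem comp_proj {Z' : Type*} (h : FiberwiseHomotopic c f g) (e : Z → Z') :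
    FiberwiseHomotopic (fun y => e (c y)) f g :=
  let ⟨K, hK0, hK1, hKc⟩ := h
  ⟨K, hK0, hK1, fun x t => congrArg e (hKc x t)⟩

theorem of_comp_proj {Z' : Type*} {e : Z → Z'} (he : Function.Injective e)
    (h : FiberwiseHomotopic (fun y => e (c y)) f g) : FiberwiseHomotopic c f g :=
  let ⟨K, hK0, hK1, hKc⟩ := h
  ⟨K, hK0, hK1, fun x t => he (hKc x t)⟩

theorem homotopic (h : FiberwiseHomotopic c f g) : f.Homotopic g :=
  let ⟨K, hK0, hK1, _⟩ := h
  ⟨⟨K.comp ContinuousMap.prodSwap, hK0, hK1⟩⟩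

end FiberwiseHomotopic

/-- `φ` is a map over `Z`, from `p : X → Z` to `q : Y → Z`, which has an inverse up to fiberwise
homotopy. -/
structure IsFiberHomotopyEquiv (p : X → Z) (q : Y → Z) (φ : C(X, Y)) : Prop where
  map_eq : ∀ x, q (φ x) = p x
  exists_inverse : ∃ ψ : C(Y, X), (∀ y, p (ψ y) = q y) ∧
    FiberwiseHomotopic p (ψ.comp φ) (.id X) ∧ FiberwiseHomotopic q (φ.comp ψ) (.id Y)

/-- The restriction to the parts lying over `U ⊆ Z` of a map `φ` over `Z`. -/
def restrictOver {p : X → Z} {q : Y → Z} (φ : C(X, Y)) (h : ∀ x, q (φ x) = p x) (U : Set Z) :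
    C({x // p x ∈ U}, {y // q y ∈ U}) :=
  ⟨fun x => ⟨φ x.1, by rw [h]; exact x.2⟩, by fun_prop⟩

theorem FiberwiseHomotopic.restrictOver {p : X → Z} {q : Y → Z} {φ φ' : C(X, Y)}
    (e : FiberwiseHomotopic q φ φ') (h : ∀ x, q (φ x) = p x) (h' : ∀ x, q (φ' x) = p x)
    (U : Set Z) : FiberwiseHomotopic (fun y : {y // q y ∈ U} => q y.1)
      (restrictOver φ h U) (_root_.restrictOver φ' h' U) := by
  obtain ⟨K, hK0, hK1, hKq⟩ := e
  exact ⟨⟨fun z => ⟨K (z.1.1, z.2), by rw [hKq, h]; exact z.1.2⟩, by fun_prop⟩,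
    fun x => Subtype.ext (hK0 x), fun x => Subtype.ext (hK1 x), fun x t => hKq _ _⟩

namespace IsFiberHomotopyEquiv

variable {p : X → Z} {q : Y → Z} {r : T → Z} {φ : C(X, Y)} {χ : C(Y, T)}

theorem of_inverse (ψ : C(Y, X)) (h : ∀ x, q (φ x) = p x) (left_inv : ∀ x, ψ (φ x) = x)
    (right_inv : ∀ y, φ (ψ y) = y) : IsFiberHomotopyEquiv p q φ :=
  ⟨h, ψ, fun y => by rw [← h, right_inv], .of_eq left_inv, .of_eq right_inv⟩

theorem comp (hχ : IsFiberHomotopyEquiv q r χ) (hφ : IsFiberHomotopyEquiv p q φ) :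
    IsFiberHomotopyEquiv p r (χ.comp φ) := by
  obtain ⟨φ_eq, ψ, ψ_eq, ψφ, φψ⟩ := hφ
  obtain ⟨χ_eq, ω, ω_eq, ωχ, χω⟩ := hχ
  exact ⟨fun x => by simp [φ_eq, χ_eq], ψ.comp ω, fun y => by simp [ψ_eq, ω_eq],
    ((ωχ.comp_right φ).comp_left ψ ψ_eq).trans ψφ, ((φψ.comp_right ω).comp_left χ χ_eq).trans χω⟩

theorem congr {φ' : C(X, Y)} (h : IsFiberHomotopyEquiv p q φ) (e : FiberwiseHomotopic q φ φ') :
    IsFiberHomotopyEquiv p q φ' := by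
  obtain ⟨φ_eq, ψ, ψ_eq, ψφ, φψ⟩ := h
  exact ⟨fun x => by rw [e.map_eq, φ_eq], ψ, ψ_eq, (e.comp_left ψ ψ_eq).symm.trans ψφ,
    (e.comp_right ψ).symm.trans φψ⟩

theorem of_comp_left (hχφ : IsFiberHomotopyEquiv p r (χ.comp φ))
    (hχ : IsFiberHomotopyEquiv q r χ) : IsFiberHomotopyEquiv p q φ := by
  obtain ⟨χ_eq, ω, ω_eq, ωχ, χω⟩ := hχ
  exact (comp ⟨ω_eq, χ, χ_eq, χω, ωχ⟩ hχφ).congr (ωχ.comp_right φ)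

theorem restrictOver (h : IsFiberHomotopyEquiv p q φ) (U : Set Z) :
    IsFiberHomotopyEquiv (fun x : {x // p x ∈ U} => p x.1) (fun y : {y // q y ∈ U} => q y.1)
      (restrictOver φ h.map_eq U) := by
  obtain ⟨φ_eq, ψ, ψ_eq, ψφ, φψ⟩ := h
  exact ⟨fun x => φ_eq x, _root_.restrictOver ψ ψ_eq U, fun y => ψ_eq y,
    ψφ.restrictOver (fun x => by simp [ψ_eq, φ_eq]) (fun _ => rfl) U,
    φψ.restrictOver (fun x => by simp [ψ_eq, φ_eq]) (fun _ => rfl) U⟩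

theorem comp_proj {Z' : Type*} (hφ : IsFiberHomotopyEquiv p q φ) (e : Z → Z') :
    IsFiberHomotopyEquiv (fun x => e (p x)) (fun y => e (q y)) φ := by
  obtain ⟨φ_eq, ψ, ψ_eq, ψφ, φψ⟩ := hφ
  exact ⟨fun x => congrArg e (φ_eq x), ψ, fun y => congrArg e (ψ_eq y), ψφ.comp_proj e,
    φψ.comp_proj e⟩

theorem of_comp_proj {Z' : Type*} {e : Z → Z'} (he : Function.Injective e)
    (hφ : IsFiberHomotopyEquiv (fun x => e (p x)) (fun y => e (q y)) φ) :
    IsFiberHomotopyEquiv p q φ := by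
  obtain ⟨φ_eq, ψ, ψ_eq, ψφ, φψ⟩ := hφ
  exact ⟨fun x => he (φ_eq x), ψ, fun y => he (ψ_eq y), ψφ.of_comp_proj he, φψ.of_comp_proj he⟩

theorem exists_homotopyEquiv (hφ : IsFiberHomotopyEquiv p q φ) :
    ∃ e : ContinuousMap.HomotopyEquiv X Y, e.toFun = φ := by
  obtain ⟨-, ψ, -, ψφ, φψ⟩ := hφ
  exact ⟨⟨φ, ψ, ψφ.homotopic, φψ.homotopic⟩, rfl⟩

end IsFiberHomotopyEquiv

end FiberwiseHomotopy

section VerticalLifting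

variable {X Y T : Type u} {Z : Type*} [TopologicalSpace X] [TopologicalSpace Y]
  [TopologicalSpace T]

/-- The homotopy lifting property of `π : X → Y` for those homotopies in `Y` along which the value
of `c : Y → Z` is constant. -/
def HasVerticalLifting (π : X → Y) (c : Y → Z) : Prop :=
  ∀ (T : Type u) [TopologicalSpace T] (f : C(T, X)) (h : C(T × I, Y)),
    (∀ x, h (x, 0) = π (f x)) → (∀ x t, c (h (x, t)) = c (h (x, 0))) →
    ∃ H : C(T × I, X), (∀ x, H (x, 0) = f x) ∧ ∀ z, π (H z) = h z

theorem IsHurewiczFibration.hasVerticalLifting {E B : Type} [TopologicalSpace E]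
    [TopologicalSpace B] {π : E → B} (hπ : IsHurewiczFibration π) (c : B → Z) :
    HasVerticalLifting π c := fun T _ f h h0 _ => hπ.2 T f h h0

/-- The time change `t ↦ |2t - 1|`, which runs through `[0,1]` backwards and then forwards. -/
def foldTime : C(I, I) :=
  ⟨fun t => ⟨|2 * (t : ℝ) - 1|, abs_nonneg _, abs_le.2 ⟨by linarith [t.2.1], by linarith [t.2.2]⟩⟩,
    by fun_prop⟩

theorem foldTime_zero : foldTime 0 = 1 := Subtype.ext (by simp [foldTime])

theorem foldTime_one : foldTime 1 = 1 := Subtype.ext (by norm_num [foldTime])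

theorem foldTime_eq_zero {t : I} (h : (t : ℝ) = 1 / 2) : foldTime t = 0 :=
  Subtype.ext (by simp [foldTime, h])

theorem exists_fold {Y : Type*} {π : X → Y} (H H' : C(T × I, X))
    (same_proj : ∀ z, π (H z) = π (H' z)) (same_start : ∀ x, H (x, 0) = H' (x, 0)) :
    ∃ G : C(T × I, X), (∀ x, G (x, 0) = H (x, 1)) ∧ (∀ x, G (x, 1) = H' (x, 1)) ∧
      ∀ x t, π (G (x, t)) = π (H (x, foldTime t)) := by
  let fold : C(T × I, T × I) := ⟨fun z => (z.1, foldTime z.2), by fun_prop⟩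
  let G : C(T × I, X) := glueLE ⟨fun z => (z.2 : ℝ), by fun_prop⟩ (.const _ (1 / 2))
    ((H.comp fold).restrict _) ((H'.comp fold).restrict _) (by
      rintro ⟨x, t⟩ ht
      change H (x, foldTime t) = H' (x, foldTime t)
      rw [foldTime_eq_zero ht, same_start])
  have G_left : ∀ x (t : I), (t : ℝ) ≤ 1 / 2 → G (x, t) = H (x, foldTime t) := fun x t ht =>
    glueLE_left ht
  have G_right : ∀ x (t : I), 1 / 2 ≤ (t : ℝ) → G (x, t) = H' (x, foldTime t) := fun x t ht =>
    glueLE_right ht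
  refine ⟨G, fun x => ?_, fun x => ?_, fun x t => ?_⟩
  · rw [G_left x 0 (by simp), foldTime_zero]
  · rw [G_right x 1 (by norm_num), foldTime_one]
  · rcases le_total (t : ℝ) (1 / 2) with ht | ht
    · rw [G_left x t ht]
    · rw [G_right x t ht, same_proj]

/- The fold of two lifts of one homotopy covers a loop that contracts by shortening; lifting the
contraction moves the two endpoints to the same fiberwise class. -/
theorem HasVerticalLifting.lift_unique {π : C(X, Y)} {c : Y → Z} (hπ : HasVerticalLifting π c)
    (H H' : C(T × I, X)) (same_proj : ∀ z, π (H z) = π (H' z))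
    (same_start : ∀ x, H (x, 0) = H' (x, 0))
    (vertical : ∀ x t, c (π (H (x, t))) = c (π (H (x, 0)))) :
    FiberwiseHomotopic π (stage H 1) (stage H' 1) := by
  obtain ⟨G, G_zero, G_one, π_G⟩ := exists_fold H H' same_proj same_start
  obtain ⟨L, L_zero, π_L⟩ := hπ (T × I) G
    ⟨fun w => π (H (w.1.1, max (foldTime w.1.2) w.2)), by fun_prop⟩
    (fun w => by simp [π_G]) (fun w t => by simp only [ContinuousMap.coe_mk, vertical])
  have max_one : ∀ t : I, max 1 t = 1 := fun t => max_eq_left t.2.2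
  have max_one' : ∀ t : I, max t 1 = 1 := fun t => max_eq_right t.2.2
  have left_edge := FiberwiseHomotopic.of_homotopy (c := π)
    (L.comp ⟨fun z : T × I => ((z.1, 0), z.2), by fun_prop⟩)
    (fun x t => by simp [π_L, foldTime_zero, max_one])
  have top_edge := FiberwiseHomotopic.of_homotopy (c := π)
    (L.comp ⟨fun z : T × I => ((z.1, z.2), 1), by fun_prop⟩)
    (fun x t => by simp [π_L, max_one'])
  have right_edge := FiberwiseHomotopic.of_homotopy (c := π)
    (L.comp ⟨fun z : T × I => ((z.1, 1), z.2), by fun_prop⟩)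
    (fun x t => by simp [π_L, foldTime_one, max_one])
  refine (FiberwiseHomotopic.of_eq fun x => ?_).trans
    (left_edge.trans (top_edge.trans (right_edge.symm.trans (.of_eq fun x => ?_))))
  · exact ((L_zero (x, 0)).trans (G_zero x)).symm
  · exact (L_zero (x, 1)).trans (G_one x)

/-- `π` has a section onto which `X` deforms along the fibers of `π`. -/
def IsShrinkable {X Y : Type*} [TopologicalSpace X] [TopologicalSpace Y] (π : C(X, Y)) : Prop :=
  ∃ s : C(Y, X), (∀ y, π (s y) = y) ∧ FiberwiseHomotopic π (.id X) (s.comp π)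

theorem IsFiberHomotopyEquiv.isShrinkable {π : C(X, Y)} {c : Y → Z}
    (h : IsFiberHomotopyEquiv (fun x => c (π x)) c π) (hπ : HasVerticalLifting π c) :
    IsShrinkable π := by
  obtain ⟨-, k, -, kπ, D, D_zero, D_one, c_D⟩ := h
  obtain ⟨H, H_zero, π_H⟩ := hπ Y k D (fun y => by simp [D_zero]) (fun y t => by rw [c_D, D_zero])
  let s : C(Y, X) := stage H 1
  have π_s : ∀ y, π (s y) = y := fun y => by simp [s, π_H, D_one]
  have k_s : FiberwiseHomotopic (fun x => c (π x)) k s :=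
    ⟨H, H_zero, fun _ => rfl, fun y t => by simp [π_H, c_D]⟩
  obtain ⟨G, G_zero, G_one, c_G⟩ := (k_s.comp_right π).symm.trans kπ
  have unique := hπ.lift_unique G ((s.comp π).comp G) (fun z => by simp [π_s])
    (fun x => by simp [G_zero, π_s]) (fun x t => by simp only [c_G, G_zero])
  exact ⟨s, π_s, (FiberwiseHomotopic.of_eq fun x => (G_one x).symm).trans
    (unique.trans (.of_eq fun x => by simp [G_one]))⟩

theorem HasVerticalLifting.restrictPreimage {π : C(X, Y)} {c : Y → Z}
    (h : HasVerticalLifting π c) (U : Set Y) :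
    HasVerticalLifting (π.restrictPreimage U) (fun y : U => c y) := by
  intro T _ f k start vertical
  obtain ⟨H, H_zero, π_H⟩ := h T ⟨fun t => (f t).1, by fun_prop⟩ ⟨fun z => (k z).1, by fun_prop⟩
    (fun x => congrArg Subtype.val (start x)) vertical
  have H_mem : ∀ z, H z ∈ π ⁻¹' U := fun z => by
    rw [Set.mem_preimage, π_H]; exact (k z).2
  exact ⟨⟨fun z => ⟨H z, H_mem z⟩, by fun_prop⟩, fun x => Subtype.ext (H_zero x),
    fun z => Subtype.ext (π_H z)⟩

end VerticalLifting

section VerticalPathSpace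

variable {X Y T : Type u} {Z : Type*} [TopologicalSpace X] [TopologicalSpace Y]
  [TopologicalSpace T]

/-- The mapping path space of `g : X → Y` restricted to paths along which `c : Y → Z` is constant:
pairs of a point `x` and such a path starting at `g x`. -/
def VerticalPathSpace (g : C(X, Y)) (c : Y → Z) : Type u :=
  {z : X × C(I, Y) // z.2 0 = g z.1 ∧ ∀ t, c (z.2 t) = c (z.2 0)}

namespace VerticalPathSpace

instance (g : C(X, Y)) (c : Y → Z) : TopologicalSpace (VerticalPathSpace g c) :=
  instTopologicalSpaceSubtype

/-- The map to the path space with given starting points and given paths. -/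
def lift {g : C(X, Y)} {c : Y → Z} (a : C(T, X)) (w : C(T × I, Y))
    (start : ∀ x, w (x, 0) = g (a x)) (vertical : ∀ x t, c (w (x, t)) = c (w (x, 0))) :
    C(T, VerticalPathSpace g c) :=
  ⟨fun x => ⟨(a x, w.curry x), start x, vertical x⟩,
    (a.continuous.prodMk w.curry.continuous).subtype_mk _⟩

variable (g : C(X, Y)) (c : Y → Z)

/-- The evaluation of a path at a time. -/
def eval : C(VerticalPathSpace g c × I, Y) :=
  ⟨fun z => z.1.1.2 z.2, by
    have : Continuous fun z : VerticalPathSpace g c × I => z.1.1 :=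
      continuous_subtype_val.comp continuous_fst
    fun_prop⟩

/-- The starting point, in `X`, of a path. -/
def source : C(VerticalPathSpace g c, X) :=
  ⟨fun z => z.1.1, continuous_fst.comp continuous_subtype_val⟩

/-- The endpoint, in `Y`, of a path. -/
def target : C(VerticalPathSpace g c, Y) := stage (eval g c) 1

/-- The inclusion of `X` by constant paths. -/
def const : C(X, VerticalPathSpace g c) :=
  lift (.id X) (g.comp ContinuousMap.fst) (fun _ => rfl) (fun _ _ => rfl)

variable {g c}

@[ext]
theorem ext {z z' : VerticalPathSpace g c} (same_source : source g c z = source g c z')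
    (same_path : ∀ t, eval g c (z, t) = eval g c (z', t)) : z = z' :=
  Subtype.ext (Prod.ext same_source (ContinuousMap.ext same_path))

theorem eval_zero (z : VerticalPathSpace g c) : eval g c (z, 0) = g (source g c z) := z.2.1

theorem map_eval (z : VerticalPathSpace g c) (t : I) :
    c (eval g c (z, t)) = c (g (source g c z)) := by
  rw [← eval_zero]; exact z.2.2 t

theorem map_target (z : VerticalPathSpace g c) : c (target g c z) = c (g (source g c z)) :=
  map_eval z 1

theorem exists_concat {f : C(T, VerticalPathSpace g c)} {h : C(T × I, Y)}
    (start : ∀ x, h (x, 0) = target g c (f x)) :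
    ∃ w : C((T × I) × I, Y),
      (∀ x (t s : I), (s : ℝ) * (1 + t) ≤ 1 → w ((x, t), s) = eval g c (f x, clamp (s * (1 + t)))) ∧
      ∀ x (t s : I), 1 ≤ (s : ℝ) * (1 + t) → w ((x, t), s) = h (x, clamp (s * (1 + t) - 1)) := by
  let length : C((T × I) × I, ℝ) := ⟨fun z => z.2 * (1 + z.1.2), by fun_prop⟩
  refine ⟨glueLE length (.const _ 1)
    ⟨fun z => eval g c (f z.1.1.1, clamp (length z.1)), by fun_prop⟩
    ⟨fun z => h (z.1.1.1, clamp (length z.1 - 1)), by fun_prop⟩ ?_,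
    fun x t s hs => glueLE_left hs, fun x t s hs => glueLE_right hs⟩
  rintro ⟨⟨x, t⟩, s⟩ (hs : length ((x, t), s) = 1)
  simp only [ContinuousMap.coe_mk, hs, sub_self, clamp_zero, clamp_one]
  exact (start x).symm

theorem hasVerticalLifting_target : HasVerticalLifting (target g c) c := by
  intro T _ f h start vertical
  obtain ⟨w, w_left, w_right⟩ := exists_concat start
  have w_zero : ∀ z : T × I, w (z, 0) = g (source g c (f z.1)) := fun z => by
    rw [w_left _ _ _ (by simp), ← eval_zero]; simp
  have c_w : ∀ z s, c (w (z, s)) = c (w (z, 0)) := by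
    rintro ⟨x, t⟩ s
    rw [w_zero]
    rcases le_total ((s : ℝ) * (1 + t)) 1 with hs | hs
    · rw [w_left _ _ _ hs, map_eval (c := c)]
    · rw [w_right _ _ _ hs, vertical, start, map_target (c := c)]
  refine ⟨lift ((source g c).comp (f.comp ContinuousMap.fst)) w w_zero c_w, fun x => ?_, ?_⟩
  · refine ext rfl fun s => ?_
    change w ((x, 0), s) = _
    rw [w_left _ _ _ (by simpa using s.2.2)]
    simp
  · rintro ⟨x, t⟩
    change w ((x, t), 1) = _
    rw [w_right _ _ _ (by simpa using t.2.1)]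
    simp

variable (g c)

theorem isFiberHomotopyEquiv_source :
    IsFiberHomotopyEquiv (fun z => c (target g c z)) (fun x => c (g x)) (source g c) := by
  refine ⟨fun z => (map_target z).symm, const g c, fun _ => rfl, ?_, .of_eq fun _ => rfl⟩
  refine ⟨lift ((source g c).comp ContinuousMap.fst)
    ((eval g c).comp ⟨fun z => (z.1.1, z.1.2 * z.2), by fun_prop⟩) (fun z => by simp [eval_zero])
    (fun z t => by simp [map_eval]), fun z => ext rfl fun t => ?_, fun z => ext rfl fun t => ?_,
    fun z t => (map_eval z (t * 1)).trans rfl⟩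
  · change eval g c (z, 0 * t) = g (source g c z)
    rw [zero_mul, eval_zero]
  · change eval g c (z, 1 * t) = eval g c (z, t)
    rw [one_mul]

theorem fiberwiseHomotopic_target :
    FiberwiseHomotopic c (g.comp (source g c)) (target g c) :=
  ⟨eval g c, eval_zero, fun _ => rfl, map_eval⟩

variable {g c}

theorem isShrinkable_target (h : IsFiberHomotopyEquiv (fun x => c (g x)) c g) :
    IsShrinkable (target g c) :=
  ((h.comp (isFiberHomotopyEquiv_source g c)).congr
    (fiberwiseHomotopic_target g c)).isShrinkable hasVerticalLifting_target

theorem isShrinkable_restrictPreimage_target {U : Set Z}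
    (h : IsFiberHomotopyEquiv (fun x : {x // c (g x) ∈ U} => c (g x.1))
      (fun y : {y // c y ∈ U} => c y.1) (restrictOver g (fun _ => rfl) U)) :
    IsShrinkable ((target g c).restrictPreimage (c ⁻¹' U)) :=
  ((h.comp ((isFiberHomotopyEquiv_source g c).restrictOver U)).congr
    ((fiberwiseHomotopic_target g c).restrictOver (fun z => (map_target z).symm)
      (fun _ => rfl) U)).isShrinkable (hasVerticalLifting_target.restrictPreimage (c ⁻¹' U))

theorem isFiberHomotopyEquiv_of_isShrinkable_target (h : IsShrinkable (target g c)) :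
    IsFiberHomotopyEquiv (fun x => c (g x)) c g := by
  obtain ⟨s, target_s, shrink⟩ := h
  have c_source : ∀ y, c (g (source g c (s y))) = c y := fun y => by
    rw [← map_target (c := c), target_s]
  obtain ⟨K, K_zero, K_one, target_K⟩ := shrink.comp_right (const g c)
  refine ⟨fun _ => rfl, (source g c).comp s, c_source, .symm ⟨(source g c).comp K, fun x => ?_,
    fun x => ?_, fun x t => ?_⟩, ((fiberwiseHomotopic_target g c).comp_right s).trans
      (.of_eq target_s)⟩
  · simp only [ContinuousMap.comp_apply, K_zero]; rfl
  · simp only [ContinuousMap.comp_apply, K_one]; rfl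
  · change c (g (source g c (K (x, t)))) = _
    rw [← map_target (c := c), target_K]; rfl

end VerticalPathSpace

end VerticalPathSpace

section LocalToGlobal

variable {R Y : Type*} [TopologicalSpace R] [TopologicalSpace Y]

theorem exists_deformation_onto_section (π : C(R, Y)) (l : C(Y, ℝ)) {a m : ℝ} (ham : a < m)
    (h : IsShrinkable (π.restrictPreimage {y | a < l y})) :
    ∃ (e : C(R, R)) (s : C({y // a < l y}, R)), (∀ y, π (s y) = y) ∧
      FiberwiseHomotopic π (.id R) e ∧ ∀ z (hz : m ≤ l (π z)), e z = s ⟨π z, ham.trans_le hz⟩ := by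
  obtain ⟨s, π_s, K, K_zero, K_one, π_K⟩ := h
  let α : C(ℝ, I) := clamp.comp ⟨fun r => (r - (a + m) / 2) / ((m - a) / 2), by fun_prop⟩
  have α_low : ∀ r ≤ (a + m) / 2, α r = 0 := fun r hr =>
    clamp_of_le_zero (div_nonpos_of_nonpos_of_nonneg (by linarith) (by linarith))
  have α_high : ∀ r, m ≤ r → α r = 1 := fun r hr =>
    clamp_of_one_le ((le_div_iff₀ (by linarith)).2 (by linarith))
  have mem : ∀ z, (a + m) / 2 ≤ l (π z) → z ∈ π ⁻¹' {y | a < l y} := fun z hz =>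
    (by linarith : a < (a + m) / 2).trans_le hz
  let G : C(R × I, R) := glueLE ⟨fun z => l (π z.1), by fun_prop⟩ (.const _ ((a + m) / 2))
    ⟨fun z => z.1.1, by fun_prop⟩
    ⟨fun z => (K (⟨z.1.1, mem z.1.1 z.2⟩, z.1.2 * α (l (π z.1.1)))).1, by fun_prop⟩
    (by
      rintro ⟨z, t⟩ (hz : l (π z) = (a + m) / 2)
      simp only [ContinuousMap.coe_mk, α_low _ hz.le, mul_zero, K_zero, ContinuousMap.id_apply])
  have G_low : ∀ z t, l (π z) ≤ (a + m) / 2 → G (z, t) = z := fun z t hz => glueLE_left hz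
  have G_high : ∀ z t (hz : (a + m) / 2 ≤ l (π z)),
      G (z, t) = (K (⟨z, mem z hz⟩, t * α (l (π z)))).1 :=
    fun z t hz => glueLE_right hz
  refine ⟨stage G 1, ⟨fun y => (s y).1, by fun_prop⟩, fun y => congrArg Subtype.val (π_s y),
    ⟨G, fun z => ?_, fun _ => rfl, fun z t => ?_⟩, fun z hz => ?_⟩
  · rcases le_total (l (π z)) ((a + m) / 2) with hz | hz
    · exact G_low z 0 hz
    · rw [G_high z 0 hz, zero_mul, K_zero]; rfl
  · rcases le_total (l (π z)) ((a + m) / 2) with hz | hz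
    · rw [G_low z t hz]; rfl
    · rw [G_high z t hz]; exact congrArg Subtype.val (π_K _ _)
  · have hz' : (a + m) / 2 ≤ l (π z) := by linarith
    rw [stage_apply, G_high z 1 hz', α_high _ hz, one_mul, K_one]; rfl

theorem isShrinkable_of_restrictPreimage (π : C(R, Y)) (l : C(Y, ℝ)) {a b : ℝ} (hab : a < b)
    (h_upper : IsShrinkable (π.restrictPreimage {y | a < l y}))
    (h_lower : IsShrinkable (π.restrictPreimage {y | l y < b})) : IsShrinkable π := by
  have neg_lt : {y | l y < b} = {y | -b < (-l) y} := by ext y; simp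
  rw [neg_lt] at h_lower
  obtain ⟨e₁, s₁, π_s₁, shrink₁, e₁_eq⟩ :=
    exists_deformation_onto_section π l (m := (a + b) / 2) (by linarith) h_upper
  obtain ⟨e₂, s₂, π_s₂, shrink₂, e₂_eq⟩ :=
    exists_deformation_onto_section π (-l) (m := -((a + b) / 2)) (by linarith) h_lower
  have π_e₁ : ∀ z, π (e₁ z) = π z := shrink₁.map_eq
  have π_e₂ : ∀ z, π (e₂ z) = π z := shrink₂.map_eq
  let s : C(Y, R) := glueLE l (.const _ ((a + b) / 2))
    ⟨fun y => s₂ ⟨y.1, by have : l y.1 ≤ (a + b) / 2 := y.2; change -b < -l y.1; linarith⟩,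
      by fun_prop⟩
    ⟨fun y => e₂ (s₁ ⟨y.1, by have : (a + b) / 2 ≤ l y.1 := y.2; linarith⟩), by fun_prop⟩
    (fun y (hy : l y = (a + b) / 2) => by
      simp only [ContinuousMap.coe_mk]
      rw [e₂_eq _ (by simp [π_s₁, hy])]
      simp [π_s₁])
  have s_low : ∀ y (hy : l y ≤ (a + b) / 2), s y = s₂ ⟨y, by change -b < -l y; linarith⟩ :=
    fun y hy => glueLE_left hy
  have s_high : ∀ y (hy : (a + b) / 2 ≤ l y), s y = e₂ (s₁ ⟨y, by linarith⟩) :=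
    fun y hy => glueLE_right hy
  refine ⟨s, fun y => ?_, (shrink₁.trans (shrink₂.comp_right e₁)).trans (.of_eq fun z => ?_)⟩
  · rcases le_total (l y) ((a + b) / 2) with hy | hy
    · rw [s_low y hy, π_s₂]
    · rw [s_high y hy, π_e₂, π_s₁]
  · change e₂ (e₁ z) = s (π z)
    rcases le_total (l (π z)) ((a + b) / 2) with hz | hz
    · rw [s_low _ hz, e₂_eq _ (by simpa [π_e₁] using hz)]
      simp [π_e₁]
    · rw [s_high _ hz, e₁_eq _ hz]

end LocalToGlobal

theorem IsFiberHomotopyEquiv.of_restrictOver {X Y : Type u} {Z : Type*} [TopologicalSpace X]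
    [TopologicalSpace Y] [TopologicalSpace Z] {p : X → Z} {q : Y → Z} (hq : Continuous q)
    (φ : C(X, Y)) (h : ∀ x, q (φ x) = p x) (l : C(Z, ℝ)) {a b : ℝ} (hab : a < b)
    (h_upper : IsFiberHomotopyEquiv (fun x : {x // p x ∈ {z | a < l z}} => p x.1) (fun y => q y.1)
      (_root_.restrictOver φ h {z | a < l z}))
    (h_lower : IsFiberHomotopyEquiv (fun x : {x // p x ∈ {z | l z < b}} => p x.1) (fun y => q y.1)
      (_root_.restrictOver φ h {z | l z < b})) :
    IsFiberHomotopyEquiv p q φ := by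
  obtain rfl : (fun x => q (φ x)) = p := funext h
  exact VerticalPathSpace.isFiberHomotopyEquiv_of_isShrinkable_target
    (isShrinkable_of_restrictPreimage _ (l.comp ⟨q, hq⟩) hab
      (VerticalPathSpace.isShrinkable_restrictPreimage_target h_upper)
      (VerticalPathSpace.isShrinkable_restrictPreimage_target h_lower))

/-! ### Absolute neighborhood extensors -/

section ANE

/-- The subset `X` is an absolute neighborhood extensor for metric spaces: every map into `X` from
a closed subset `C` of a metric space extends to a neighborhood of `C`. Partial maps are encoded as
total functions with `ContinuousOn` and `MapsTo` conditions. -/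
def IsANE {V : Type*} [TopologicalSpace V] (X : Set V) : Prop :=
  ∀ (M : Type) [MetricSpace M] (C : Set M) (f : M → V), IsClosed C → ContinuousOn f C →
    Set.MapsTo f C X → ∃ (O : Set M) (g : M → V), IsOpen O ∧ C ⊆ O ∧ ContinuousOn g O ∧
      Set.MapsTo g O X ∧ Set.EqOn g f C

variable {V W : Type*} [TopologicalSpace V] [TopologicalSpace W]

theorem IsANE.of_rightInvOn {X : Set V} {Y : Set W} (hX : IsANE X) {r : V → W} {i : W → V}
    (hr : ContinuousOn r X) (hi : ContinuousOn i Y) (hrX : Set.MapsTo r X Y)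
    (hiY : Set.MapsTo i Y X) (hri : Set.RightInvOn i r Y) : IsANE Y := by
  intro M _ C f hC hf hfC
  obtain ⟨O, g, hO, hCO, hg, hgX, hgf⟩ := hX M C (i ∘ f) hC (hi.comp hf hfC) (hiY.comp hfC)
  refine ⟨O, r ∘ g, hO, hCO, hr.comp hg hgX, hrX.comp hgX, fun x hx => ?_⟩
  rw [Function.comp_apply, hgf hx]
  exact hri (hfC hx)

theorem IsANE.prod {X : Set V} {Y : Set W} (hX : IsANE X) (hY : IsANE Y) : IsANE (X ×ˢ Y) := by
  intro M _ C f hC hf hfC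
  obtain ⟨O, g, hO, hCO, hg, hgX, hgf⟩ := hX M C (Prod.fst ∘ f) hC
    (continuous_fst.comp_continuousOn hf) fun x hx => (hfC hx).1
  obtain ⟨O', g', hO', hCO', hg', hgY, hgf'⟩ := hY M C (Prod.snd ∘ f) hC
    (continuous_snd.comp_continuousOn hf) fun x hx => (hfC hx).2
  exact ⟨O ∩ O', fun x => (g x, g' x), hO.inter hO', Set.subset_inter hCO hCO',
    (hg.mono Set.inter_subset_left).prodMk (hg'.mono Set.inter_subset_right),
    fun x hx => ⟨hgX hx.1, hgY hx.2⟩, fun x hx => Prod.ext (hgf hx) (hgf' hx)⟩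

theorem IsANE.empty : IsANE (∅ : Set V) := fun _ _ _ f _ _ hfC =>
  ⟨∅, f, isOpen_empty, fun _ hx => (hfC hx).elim, continuousOn_empty f, fun _ hx => hx.elim,
    fun _ _ => rfl⟩

theorem exists_isClosed_cover_inter_subset {M : Type*} [PseudoEMetricSpace M] {C₁ C₂ : Set M}
    (hC₁ : IsClosed C₁) (hC₂ : IsClosed C₂) :
    ∃ Y₁ Y₂ : Set M, IsClosed Y₁ ∧ IsClosed Y₂ ∧ Y₁ ∪ Y₂ = Set.univ ∧
      (C₁ ∪ C₂) ∩ Y₁ ⊆ C₁ ∧ (C₁ ∪ C₂) ∩ Y₂ ⊆ C₂ := by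
  have mem_of_infEDist_le : ∀ {C C' : Set M}, IsClosed C → ∀ x ∈ C ∪ C',
      Metric.infEDist x C ≤ Metric.infEDist x C' → x ∈ C := by
    rintro C C' hC x (hx | hx) h
    · exact hx
    · rw [Metric.infEDist_zero_of_mem hx] at h
      exact (Metric.mem_iff_infEDist_zero_of_closed hC).2 (le_bot_iff.1 h)
  refine ⟨{x | Metric.infEDist x C₁ ≤ Metric.infEDist x C₂},
    {x | Metric.infEDist x C₂ ≤ Metric.infEDist x C₁},
    isClosed_le Metric.continuous_infEDist Metric.continuous_infEDist,
    isClosed_le Metric.continuous_infEDist Metric.continuous_infEDist,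
    Set.eq_univ_of_forall fun x => le_total (Metric.infEDist x C₁) (Metric.infEDist x C₂),
    fun x hx => mem_of_infEDist_le hC₁ x hx.1 hx.2,
    fun x hx => mem_of_infEDist_le hC₂ x hx.1.symm hx.2⟩

theorem IsANE.exists_extension_union {X : Set V} (hX : IsANE X) {M : Type} [MetricSpace M]
    {C D : Set M} {f g : M → V} (hC : IsClosed C) (hD : IsClosed D) (hf : ContinuousOn f C)
    (hg : ContinuousOn g D) (hfX : Set.MapsTo f C X) (hgX : Set.MapsTo g D X)
    (hfg : Set.EqOn f g (C ∩ D)) :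
    ∃ (O : Set M) (k : M → V), IsOpen O ∧ C ⊆ O ∧ ContinuousOn k O ∧ Set.MapsTo k O X ∧
      Set.EqOn k f C ∧ Set.EqOn k g D := by
  classical
  have eq_f : Set.EqOn (C.piecewise f g) f C := C.piecewise_eqOn f g
  have eq_g : Set.EqOn (C.piecewise f g) g D := by
    intro x hxD
    by_cases hxC : x ∈ C
    · rw [eq_f hxC, hfg ⟨hxC, hxD⟩]
    · exact C.piecewise_eqOn_compl f g hxC
  obtain ⟨O, k, hO, hCO, hk, hkX, hkf⟩ := hX M (C ∪ D) (C.piecewise f g) (hC.union hD)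
    ((hf.congr eq_f).union_of_isClosed (hg.congr eq_g) hC hD)
    ((hfX.congr eq_f.symm).union (hgX.congr eq_g.symm))
  exact ⟨O, k, hO, Set.subset_union_left.trans hCO, hk, hkX,
    (hkf.mono Set.subset_union_left).trans eq_f, (hkf.mono Set.subset_union_right).trans eq_g⟩

theorem exists_isOpen_continuousOn_glue {M : Type*} [TopologicalSpace M] {C Y₁ Y₂ O₁ O₂ N : Set M}
    {g₁ g₂ : M → V} (hY₁ : IsClosed Y₁) (hY₂ : IsClosed Y₂) (hY : Y₁ ∪ Y₂ = Set.univ)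
    (hO₁ : IsOpen O₁) (hO₂ : IsOpen O₂) (hN : IsOpen N) (hg₁ : ContinuousOn g₁ O₁)
    (hg₂ : ContinuousOn g₂ O₂) (hg : Set.EqOn g₁ g₂ (Y₁ ∩ Y₂ ∩ N)) (hC₁ : C ∩ Y₁ ⊆ O₁)
    (hC₂ : C ∩ Y₂ ⊆ O₂) (hCN : C ∩ (Y₁ ∩ Y₂) ⊆ N) :
    ∃ (O : Set M) (g : M → V), IsOpen O ∧ C ⊆ O ∧ ContinuousOn g O ∧ O ∩ Y₁ ⊆ O₁ ∧ O ∩ Y₂ ⊆ O₂ ∧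
      Set.EqOn g g₁ (O ∩ Y₁) ∧ Set.EqOn g g₂ (O ∩ Y₂) := by
  classical
  have subset_iff : ∀ {S T U : Set M}, S ⊆ Tᶜ ∪ U ↔ S ∩ T ⊆ U := by
    intro S T U
    rw [← Set.sdiff_subset_iff, Set.sdiff_compl]
  set O : Set M := (Y₁ᶜ ∪ O₁) ∩ (Y₂ᶜ ∪ O₂) ∩ ((Y₁ ∩ Y₂)ᶜ ∪ N)
  have hOY₁ : O ∩ Y₁ ⊆ O₁ := subset_iff.1 fun x hx => hx.1.1
  have hOY₂ : O ∩ Y₂ ⊆ O₂ := subset_iff.1 fun x hx => hx.1.2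
  have hON : O ∩ (Y₁ ∩ Y₂) ⊆ N := subset_iff.1 fun x hx => hx.2
  have eq₁ : Set.EqOn (Y₁.piecewise g₁ g₂) g₁ (O ∩ Y₁) :=
    (Y₁.piecewise_eqOn g₁ g₂).mono Set.inter_subset_right
  have eq₂ : Set.EqOn (Y₁.piecewise g₁ g₂) g₂ (O ∩ Y₂) := by
    intro x hx
    by_cases hx₁ : x ∈ Y₁
    · rw [Y₁.piecewise_eqOn g₁ g₂ hx₁]
      exact hg ⟨⟨hx₁, hx.2⟩, hON ⟨hx.1, hx₁, hx.2⟩⟩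
    · exact Y₁.piecewise_eqOn_compl g₁ g₂ hx₁
  refine ⟨O, Y₁.piecewise g₁ g₂, ?_, ?_, ?_, hOY₁, hOY₂, eq₁, eq₂⟩
  · exact ((hY₁.isOpen_compl.union hO₁).inter (hY₂.isOpen_compl.union hO₂)).inter
      ((hY₁.inter hY₂).isOpen_compl.union hN)
  · exact Set.subset_inter (Set.subset_inter (subset_iff.2 hC₁) (subset_iff.2 hC₂))
      (subset_iff.2 hCN)
  · have closure_compl_subset : closure Y₁ᶜ ⊆ Y₂ :=
      closure_minimal (Set.compl_subset_iff_union.2 hY) hY₂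
    refine ContinuousOn.piecewise (fun x hx => ?_) ?_ ?_
    · have hx₁ : x ∈ Y₁ := hY₁.frontier_subset hx.2
      have hx₂ : x ∈ Y₂ := closure_compl_subset (frontier_subset_closure (frontier_compl Y₁ ▸ hx.2))
      exact hg ⟨⟨hx₁, hx₂⟩, hON ⟨hx.1, hx₁, hx₂⟩⟩
    · rw [hY₁.closure_eq]
      exact hg₁.mono hOY₁
    · exact hg₂.mono ((Set.inter_subset_inter_right O closure_compl_subset).trans hOY₂)

theorem IsANE.union {X₁ X₂ : Set V} (hX₁ : IsClosed X₁) (hX₂ : IsClosed X₂) (h₁ : IsANE X₁)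
    (h₂ : IsANE X₂) (h₁₂ : IsANE (X₁ ∩ X₂)) : IsANE (X₁ ∪ X₂) := by
  intro M _ C f hC hf hfC
  have hC₁ : IsClosed (C ∩ f ⁻¹' X₁) := hf.preimage_isClosed_of_isClosed hC hX₁
  have hC₂ : IsClosed (C ∩ f ⁻¹' X₂) := hf.preimage_isClosed_of_isClosed hC hX₂
  obtain ⟨Y₁, Y₂, hY₁, hY₂, hY, hCY₁, hCY₂⟩ := exists_isClosed_cover_inter_subset hC₁ hC₂
  rw [← Set.inter_union_distrib_left, ← Set.preimage_union,
    Set.inter_eq_left.2 (Set.mapsTo_iff_subset_preimage.1 hfC)] at hCY₁ hCY₂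
  obtain ⟨O₀, g₀, hO₀, hCO₀, hg₀, hg₀X, hg₀f⟩ := h₁₂ M _ f (hC₁.inter hC₂)
    (hf.mono fun x hx => hx.1.1) fun x hx => ⟨hx.1.2, hx.2.2⟩
  obtain ⟨N, hN, hCN, hNO₀⟩ := normal_exists_closure_subset (hC₁.inter hC₂) hO₀ hCO₀
  have hZ : IsClosed (Y₁ ∩ Y₂ ∩ closure N) := (hY₁.inter hY₂).inter isClosed_closure
  have hZO₀ : Y₁ ∩ Y₂ ∩ closure N ⊆ O₀ := Set.inter_subset_right.trans hNO₀
  obtain ⟨O₁, g₁, hO₁, hCO₁, hg₁, hg₁X, hg₁f, hg₁Z⟩ := h₁.exists_extension_union hC₁ hZ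
    (hf.mono Set.inter_subset_left) (hg₀.mono hZO₀) (fun x hx => hx.2)
    (fun x hx => (hg₀X (hZO₀ hx)).1) fun x hx => (hg₀f ⟨hx.1, hCY₂ ⟨hx.1.1, hx.2.1.2⟩⟩).symm
  obtain ⟨O₂, g₂, hO₂, hCO₂, hg₂, hg₂X, hg₂f, hg₂Z⟩ := h₂.exists_extension_union hC₂ hZ
    (hf.mono Set.inter_subset_left) (hg₀.mono hZO₀) (fun x hx => hx.2)
    (fun x hx => (hg₀X (hZO₀ hx)).2) fun x hx => (hg₀f ⟨hCY₁ ⟨hx.1.1, hx.2.1.1⟩, hx.1⟩).symm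
  have subset_Z : Y₁ ∩ Y₂ ∩ N ⊆ Y₁ ∩ Y₂ ∩ closure N :=
    Set.inter_subset_inter_right _ subset_closure
  obtain ⟨O, g, hO, hCO, hg, hOY₁, hOY₂, hgg₁, hgg₂⟩ := exists_isOpen_continuousOn_glue hY₁ hY₂ hY
    hO₁ hO₂ hN hg₁ hg₂ ((hg₁Z.mono subset_Z).trans (hg₂Z.mono subset_Z).symm)
    (hCY₁.trans hCO₁) (hCY₂.trans hCO₂)
    fun x hx => hCN ⟨hCY₁ ⟨hx.1, hx.2.1⟩, hCY₂ ⟨hx.1, hx.2.2⟩⟩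
  have mem_or (x : M) : x ∈ Y₁ ∪ Y₂ := hY ▸ Set.mem_univ x
  refine ⟨O, g, hO, hCO, hg, fun x hx => ?_, fun x hx => ?_⟩
  · rcases mem_or x with hxY | hxY
    · exact Or.inl (hgg₁ ⟨hx, hxY⟩ ▸ hg₁X (hOY₁ ⟨hx, hxY⟩))
    · exact Or.inr (hgg₂ ⟨hx, hxY⟩ ▸ hg₂X (hOY₂ ⟨hx, hxY⟩))
  · rcases mem_or x with hxY | hxY
    · exact (hgg₁ ⟨hCO hx, hxY⟩).trans (hg₁f (hCY₁ ⟨hx, hxY⟩))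
    · exact (hgg₂ ⟨hCO hx, hxY⟩).trans (hg₂f (hCY₂ ⟨hx, hxY⟩))

theorem exists_lipschitzWith_one_retraction {H : Type*} [NormedAddCommGroup H]
    [InnerProductSpace ℝ H] {X : Set H} (hne : X.Nonempty) (hX : IsComplete X)
    (hconv : Convex ℝ X) : ∃ P : H → H, LipschitzWith 1 P ∧ (∀ u, P u ∈ X) ∧ ∀ u ∈ X, P u = u := by
  choose P hPX hPmin using exists_norm_eq_iInf_of_complete_convex hne hX hconv
  have obtuse : ∀ u, ∀ w ∈ X, inner ℝ (u - P u) (w - P u) ≤ 0 := fun u =>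
    (norm_eq_iInf_iff_real_inner_le_zero hconv (hPX u)).1 (hPmin u)
  refine ⟨P, LipschitzWith.of_dist_le_mul fun u v => ?_, hPX, fun u hu => ?_⟩
  · have norm_sq_le : ‖P u - P v‖ ^ 2 ≤ inner ℝ (u - v) (P u - P v) := by
      have expand : inner ℝ (u - v) (P u - P v) - ‖P u - P v‖ ^ 2
          = -inner ℝ (u - P u) (P v - P u) - inner ℝ (v - P v) (P u - P v) := by
        rw [← real_inner_self_eq_norm_sq, ← neg_sub (P u) (P v), inner_neg_right, neg_neg,
          ← inner_sub_left, ← inner_sub_left]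
        congr 1
        abel
      linarith [obtuse u (P v) (hPX v), obtuse v (P u) (hPX u)]
    have cauchy_schwarz := real_inner_le_norm (u - v) (P u - P v)
    rw [dist_eq_norm, dist_eq_norm, NNReal.coe_one, one_mul]
    by_contra! hlt
    nlinarith [norm_nonneg (u - v), norm_nonneg (P u - P v)]
  · have self_le := obtuse u u hu
    rw [real_inner_self_nonpos, sub_eq_zero] at self_le
    exact self_le.symm

theorem IsANE.of_convex {V : Type*} [NormedAddCommGroup V] [NormedSpace ℝ V]
    [FiniteDimensional ℝ V] {X : Set V} (hX : IsClosed X) (hconv : Convex ℝ X) : IsANE X := by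
  rcases X.eq_empty_or_nonempty with rfl | hne
  · exact IsANE.empty
  let e := toEuclidean (E := V)
  obtain ⟨P, hP, hPX, hPid⟩ := exists_lipschitzWith_one_retraction (hne.image e)
    (e.toHomeomorph.isClosedMap _ hX).isComplete (hconv.linear_image e.toLinearMap)
  intro M _ C f hC hf hfC
  obtain ⟨g, hg⟩ := ContinuousMap.exists_restrict_eq hC
    ⟨C.domRestrict (e ∘ f), continuousOn_iff_continuous_domRestrict.1
      (e.continuous.comp_continuousOn hf)⟩
  refine ⟨Set.univ, e.symm ∘ P ∘ g, isOpen_univ, Set.subset_univ C,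
    (e.symm.continuous.comp (hP.continuous.comp g.continuous)).continuousOn, fun x _ => ?_,
    fun x hx => ?_⟩
  · obtain ⟨y, hy, hyP⟩ := hPX (g x)
    rw [Function.comp_apply, Function.comp_apply, ← hyP]
    exact (e.symm_apply_apply y).symm ▸ hy
  · have hgx : g x = e (f x) := congrArg (fun k => k ⟨x, hx⟩) hg
    rw [Function.comp_apply, Function.comp_apply, hgx, hPid _ ⟨f x, hfC hx, rfl⟩]
    exact e.symm_apply_apply (f x)

theorem IsANE.isENR {V : Type} [NormedAddCommGroup V] [NormedSpace ℝ V] [FiniteDimensional ℝ V]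
    {X : Set V} (hX : IsANE X) (hXc : IsClosed X) : IsENR X := by
  let e := (toEuclidean (E := V)).toHomeomorph.trans
    (EuclideanSpace.equiv (Fin (Module.finrank ℝ V)) ℝ).toHomeomorph
  have image_isANE : IsANE (e '' X) :=
    hX.of_rightInvOn e.continuous.continuousOn e.symm.continuous.continuousOn
      (Set.mapsTo_image e X) (by rintro _ ⟨x, hx, rfl⟩; rwa [e.symm_apply_apply])
      fun y _ => e.apply_symm_apply y
  obtain ⟨O, g, hO, hXO, hg, hgX, hgid⟩ := image_isANE _ _ id (e.isClosedMap X hXc)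
    continuousOn_id (Set.mapsTo_id _)
  exact ⟨_, e '' X, ⟨e.image X⟩, O, hO, hXO,
    ⟨fun x => ⟨g x, hgX x.2⟩, (continuousOn_iff_continuous_domRestrict.1 hg).subtype_mk _⟩,
    fun x hx => Subtype.ext (hgid hx)⟩

end ANE

/-! ### Finite unions of compact convex sets -/

section FiniteConvexUnion

variable {V : Type*} [NormedAddCommGroup V] [NormedSpace ℝ V]

/-- Finite unions of compact convex sets. Unlike polyhedra, these are defined without reference to a
triangulation, and are visibly closed under finite unions and intersections. -/
inductive IsFiniteConvexUnion : Set V → Prop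
  | empty : IsFiniteConvexUnion ∅
  | union_convex (X A : Set V) : IsFiniteConvexUnion X → IsCompact A → Convex ℝ A →
    IsFiniteConvexUnion (X ∪ A)

namespace IsFiniteConvexUnion

theorem isCompact {X : Set V} (hX : IsFiniteConvexUnion X) : IsCompact X := by
  induction hX with
  | empty => exact isCompact_empty
  | union_convex X A _ hA _ ih => exact ih.union hA

theorem of_convex {A : Set V} (hA : IsCompact A) (hconv : Convex ℝ A) : IsFiniteConvexUnion A := by
  simpa only [Set.empty_union] using union_convex ∅ A empty hA hconv

theorem union {X Y : Set V} (hX : IsFiniteConvexUnion X) (hY : IsFiniteConvexUnion Y) :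
    IsFiniteConvexUnion (X ∪ Y) := by
  induction hY with
  | empty => rwa [Set.union_empty]
  | union_convex Y A _ hA hconv ih =>
    rw [← Set.union_assoc]
    exact union_convex _ _ ih hA hconv

theorem inter_convex {X Q : Set V} (hX : IsFiniteConvexUnion X) (hQ : IsClosed Q)
    (hconv : Convex ℝ Q) : IsFiniteConvexUnion (X ∩ Q) := by
  induction hX with
  | empty => rw [Set.empty_inter]; exact empty
  | union_convex X A _ hA hconvA ih =>
    rw [Set.union_inter_distrib_right]
    exact union_convex _ _ ih (hA.inter_right hQ) (hconvA.inter hconv)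

theorem inter {X Y : Set V} (hX : IsFiniteConvexUnion X) (hY : IsFiniteConvexUnion Y) :
    IsFiniteConvexUnion (X ∩ Y) := by
  induction hY with
  | empty => rw [Set.inter_empty]; exact empty
  | union_convex Y A _ hA hconv ih =>
    rw [Set.inter_union_distrib_left]
    exact ih.union (hX.inter_convex hA.isClosed hconv)

theorem biUnion {ι : Type*} (s : Finset ι) {X : ι → Set V}
    (hX : ∀ i ∈ s, IsFiniteConvexUnion (X i)) : IsFiniteConvexUnion (⋃ i ∈ s, X i) := by
  classical
  induction s using Finset.induction_on with
  | empty => simpa using empty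
  | insert a s _ ih =>
    rw [Finset.set_biUnion_insert]
    exact (hX a (Finset.mem_insert_self a s)).union
      (ih fun i hi => hX i (Finset.mem_insert_of_mem hi))

theorem isANE [FiniteDimensional ℝ V] {X : Set V} (hX : IsFiniteConvexUnion X) : IsANE X := by
  suffices inter_isANE : ∀ Q : Set V, IsClosed Q → Convex ℝ Q → IsANE (X ∩ Q) by
    simpa only [Set.inter_univ] using inter_isANE Set.univ isClosed_univ convex_univ
  induction hX with
  | empty =>
    intro Q _ _
    rw [Set.empty_inter]
    exact IsANE.empty
  | union_convex X A hX hA hconvA ih =>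
    intro Q hQ hconvQ
    have hAQ : IsClosed (A ∩ Q) := hA.isClosed.inter hQ
    rw [Set.union_inter_distrib_right]
    refine IsANE.union (hX.isCompact.isClosed.inter hQ) hAQ (ih Q hQ hconvQ)
      (IsANE.of_convex hAQ (hconvA.inter hconvQ)) ?_
    rw [← Set.inter_inter_distrib_right, Set.inter_assoc]
    exact ih (A ∩ Q) hAQ (hconvA.inter hconvQ)

theorem simplicialComplex_space {K : Geometry.SimplicialComplex ℝ V} (hK : K.faces.Finite) :
    IsFiniteConvexUnion K.space := by
  have space_eq : K.space = ⋃ s ∈ hK.toFinset, convexHull ℝ (s : Set V) := by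
    simp only [Geometry.SimplicialComplex.space, Set.Finite.mem_toFinset]
  rw [space_eq]
  exact biUnion _ fun s _ => of_convex (s.finite_toSet.isCompact_convexHull (𝕜 := ℝ))
    (convex_convexHull ℝ _)

end IsFiniteConvexUnion

/-- Continuous functions whose sublevel and superlevel sets cut finite unions of compact convex sets
into such unions. They serve to subdivide the base of a fibration. -/
structure IsConvexCutFunction (l : V → ℝ) : Prop where
  continuous : Continuous l
  inter_le : ∀ X t, IsFiniteConvexUnion X → IsFiniteConvexUnion (X ∩ {x | l x ≤ t})
  inter_ge : ∀ X t, IsFiniteConvexUnion X → IsFiniteConvexUnion (X ∩ {x | t ≤ l x})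

theorem setOf_le_norm_sub_eq_iUnion {ι : Type*} [Fintype ι] (c : ι → ℝ) {t : ℝ} (ht : 0 < t) :
    {x : ι → ℝ | t ≤ ‖x - c‖} =
      ⋃ i ∈ (Finset.univ : Finset ι), ({x | c i + t ≤ x i} ∪ {x | x i ≤ c i - t}) := by
  ext x
  have le_norm_iff : t ≤ ‖x - c‖ ↔ ∃ i, t ≤ |x i - c i| := by
    rw [← not_iff_not, not_le, pi_norm_lt_iff ht]
    simp
  simp only [Set.mem_ofPred_eq, le_norm_iff, Finset.mem_univ, Set.iUnion_true, Set.mem_iUnion,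
    Set.mem_union, le_abs']
  refine exists_congr fun i => ⟨?_, ?_⟩ <;> rintro (h | h)
  exacts [Or.inr (by linarith), Or.inl (by linarith), Or.inr (by linarith), Or.inl (by linarith)]

theorem isConvexCutFunction_norm_sub {ι : Type*} [Fintype ι] (c : ι → ℝ) :
    IsConvexCutFunction fun x : ι → ℝ => ‖x - c‖ := by
  refine ⟨by fun_prop, fun X t hX => ?_, fun X t hX => ?_⟩
  · have sublevel_eq : {x : ι → ℝ | ‖x - c‖ ≤ t} = Metric.closedBall c t := by
      ext x
      simp [dist_eq_norm]
    rw [sublevel_eq]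
    exact hX.inter_convex Metric.isClosed_closedBall (convex_closedBall c t)
  · rcases le_or_gt t 0 with ht | ht
    · have superlevel_eq : {x : ι → ℝ | t ≤ ‖x - c‖} = Set.univ :=
        Set.eq_univ_of_forall fun x => ht.trans (norm_nonneg (x - c))
      rwa [superlevel_eq, Set.inter_univ]
    · rw [setOf_le_norm_sub_eq_iUnion c ht, Set.inter_iUnion₂]
      refine IsFiniteConvexUnion.biUnion _ fun i _ => ?_
      have coord_linear : IsLinearMap ℝ fun x : ι → ℝ => x i := ⟨fun _ _ => rfl, fun _ _ => rfl⟩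
      rw [Set.inter_union_distrib_left]
      exact (hX.inter_convex (isClosed_le (by fun_prop) (by fun_prop))
        (convex_halfSpace_ge coord_linear _)).union
        (hX.inter_convex (isClosed_le (by fun_prop) (by fun_prop))
        (convex_halfSpace_le coord_linear _))

theorem IsConvexCutFunction.sub_mul {l : V → ℝ} (hl : IsConvexCutFunction l) (s : ℝ) {k : ℝ}
    (hk : 0 < k) : IsConvexCutFunction fun x => (l x - s) * k := by
  have hcont := hl.continuous
  refine ⟨by fun_prop, fun X t hX => ?_, fun X t hX => ?_⟩
  · have sublevel_eq : {x | (l x - s) * k ≤ t} = {x | l x ≤ t / k + s} := by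
      ext x
      rw [Set.mem_ofPred_eq, Set.mem_ofPred_eq, ← le_div_iff₀ hk, sub_le_iff_le_add]
    rw [sublevel_eq]
    exact hl.inter_le X _ hX
  · have superlevel_eq : {x | t ≤ (l x - s) * k} = {x | t / k + s ≤ l x} := by
      ext x
      rw [Set.mem_ofPred_eq, Set.mem_ofPred_eq, ← div_le_iff₀ hk, le_sub_iff_add_le]
    rw [superlevel_eq]
    exact hl.inter_ge X _ hX

end FiniteConvexUnion

/-! ### Homotopy invariance of pullbacks of a fibration -/

section Pullback

variable {K B T F : Type} [TopologicalSpace K] [TopologicalSpace B] [TopologicalSpace T]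
  [TopologicalSpace F]

/-- A lift to `π : T → B`, with the canonical initial condition, of the homotopy induced by
`h : j₀ ≃ j₁` on the pullback of `π` along `j₀`. Its end stage compares the pullbacks along `j₀` and
along `j₁`. -/
structure PullbackTransport (π : C(T, B)) {j₀ j₁ : C(K, B)} (h : j₀.Homotopy j₁) where
  toMap : C(Function.Pullback j₀ π × I, T)
  map_zero : ∀ z, toMap (z, 0) = z.1.2
  proj : ∀ z t, π (toMap (z, t)) = h (t, z.1.1)

namespace PullbackTransport

variable {π : C(T, B)} {j₀ j₁ : C(K, B)} {h : j₀.Homotopy j₁}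

/-- The end stage of a pullback transport. -/
def endMap (D : PullbackTransport π h) : C(Function.Pullback j₀ π, Function.Pullback j₁ π) :=
  ⟨fun z => ⟨(z.1.1, D.toMap (z, 1)), by rw [D.proj, h.apply_one]⟩, by
    have := D.toMap.continuous
    fun_prop⟩

theorem nonempty (hπ : IsHurewiczFibration π) : Nonempty (PullbackTransport π h) := by
  obtain ⟨D, D_zero, π_D⟩ := hπ.2 (Function.Pullback j₀ π) ⟨fun z => z.1.2, by fun_prop⟩
    ⟨fun z => h (z.2, z.1.1.1), by fun_prop⟩ fun z => (h.apply_zero _).trans z.2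
  exact ⟨D, D_zero, fun z t => π_D (z, t)⟩

theorem endMap_comp_endMap (hπ : IsHurewiczFibration π) (D : PullbackTransport π h)
    (U : PullbackTransport π h.symm) :
    FiberwiseHomotopic (fun z => z.1.1) (U.endMap.comp D.endMap)
      (.id (Function.Pullback j₀ π)) := by
  obtain ⟨G, G_zero, G_one, π_G⟩ := (hπ.hasVerticalLifting fun _ => ()).lift_unique
    (U.toMap.comp (D.endMap.prodMap (.id I)))
    (D.toMap.comp ⟨fun z => (z.1, σ z.2), by fun_prop⟩)
    (fun z => (U.proj _ _).trans (D.proj _ _).symm)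
    (fun z => by
      refine (U.map_zero _).trans ?_
      change D.toMap (z, 1) = D.toMap (z, σ 0)
      rw [symm_zero])
    (fun _ _ => rfl)
  have G_over : ∀ w : Function.Pullback j₀ π × I, j₀ w.1.1.1 = π (G w) := fun w =>
    ((π_G w.1 w.2).trans ((U.proj _ _).trans (h.symm.apply_one _))).symm
  refine ⟨⟨fun w => ⟨(w.1.1.1, G w), G_over w⟩, by fun_prop⟩,
    fun z => Subtype.ext (Prod.ext rfl (G_zero z)), fun z => Subtype.ext (Prod.ext rfl ?_),
    fun _ _ => rfl⟩
  refine (G_one z).trans ?_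
  change D.toMap (z, σ 1) = z.1.2
  rw [symm_one, D.map_zero]

theorem isFiberHomotopyEquiv_endMap (hπ : IsHurewiczFibration π) (D : PullbackTransport π h) :
    IsFiberHomotopyEquiv (fun z => z.1.1) (fun z => z.1.1) D.endMap := by
  obtain ⟨U⟩ := nonempty (h := h.symm) hπ
  refine ⟨fun _ => rfl, U.endMap, fun _ => rfl, endMap_comp_endMap hπ D U, ?_⟩
  exact endMap_comp_endMap hπ U ⟨D.toMap, D.map_zero, fun z t => by
    rw [D.proj, ContinuousMap.Homotopy.symm_symm]⟩

end PullbackTransport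

theorem exists_isFiberHomotopyEquiv_prod_fiber {π : C(T, B)} (hπ : IsHurewiczFibration π)
    {j : C(K, B)} {b : B} (h : j.Homotopy (.const K b)) :
    ∃ u : C(K × {a // π a = b}, Function.Pullback j π),
      IsFiberHomotopyEquiv Prod.fst (fun z => z.1.1) u := by
  obtain ⟨D⟩ := PullbackTransport.nonempty (h := h.symm) hπ
  let e : C(K × {a // π a = b}, Function.Pullback (ContinuousMap.const K b) π) :=
    ⟨fun z => ⟨(z.1, z.2.1), z.2.2.symm⟩, by fun_prop⟩
  have he : IsFiberHomotopyEquiv Prod.fst (fun z => z.1.1) e :=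
    .of_inverse ⟨fun z => (z.1.1, ⟨z.1.2, z.2.symm⟩), by fun_prop⟩
      (fun _ => rfl) (fun _ => rfl) fun _ => rfl
  exact ⟨_, (D.isFiberHomotopyEquiv_endMap hπ).comp he⟩

theorem IsFiberHomotopyEquiv.prod_homotopyEquiv (K : Type*) [TopologicalSpace K]
    (e : ContinuousMap.HomotopyEquiv F T) :
    IsFiberHomotopyEquiv (Prod.fst : K × F → K) Prod.fst
      ((ContinuousMap.id K).prodMap e.toFun) := by
  obtain ⟨H⟩ := e.left_inv
  obtain ⟨H'⟩ := e.right_inv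
  exact ⟨fun _ => rfl, (ContinuousMap.id K).prodMap e.invFun, fun _ => rfl,
    ⟨⟨fun z => (z.1.1, H (z.2, z.1.2)), by fun_prop⟩, fun x => Prod.ext rfl (by simp),
      fun x => Prod.ext rfl (by simp), fun _ _ => rfl⟩,
    ⟨⟨fun z => (z.1.1, H' (z.2, z.1.2)), by fun_prop⟩, fun x => Prod.ext rfl (by simp),
      fun x => Prod.ext rfl (by simp), fun _ _ => rfl⟩⟩

theorem exists_trivialization_of_homotopy_const {V : Type} [TopologicalSpace V] {S K : Set V}
    {π : C(T, S)} (hπ : IsHurewiczFibration π) (hKS : K ⊆ S) {b : S}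
    (h : (ContinuousMap.inclusion hKS).Homotopy (.const K b))
    (e : ContinuousMap.HomotopyEquiv F {a // π a = b}) :
    ∃ u : C(K × F, {a // (π a : V) ∈ K}),
      IsFiberHomotopyEquiv (fun z => (z.1 : V)) (fun a => (π a.1 : V)) u := by
  obtain ⟨u, hu⟩ := exists_isFiberHomotopyEquiv_prod_fiber hπ h
  let χ : C(Function.Pullback (ContinuousMap.inclusion hKS) π, {a // (π a : V) ∈ K}) :=
    ⟨fun z => ⟨z.1.2, z.2 ▸ z.1.1.2⟩, by fun_prop⟩
  have hχ : IsFiberHomotopyEquiv (fun z => (z.1.1 : V)) (fun a => (π a.1 : V)) χ :=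
    .of_inverse ⟨fun a => ⟨(⟨π a.1, a.2⟩, a.1), rfl⟩, by fun_prop⟩
      (fun z => (congrArg Subtype.val z.2).symm)
      (fun z => Subtype.ext (Prod.ext (Subtype.ext (congrArg Subtype.val z.2).symm) rfl))
      fun _ => rfl
  exact ⟨_, hχ.comp ((hu.comp (.prod_homotopyEquiv K e)).comp_proj Subtype.val)⟩

end Pullback

/-! ### Gluing a trivial piece to a model -/

section Rebase

variable {T V : Type*} [TopologicalSpace T] {q : T → V} {K U K' U' : Set V}

/-- The inclusion of the part of `T` over `K ∩ U` into the part over `K' ∩ U'`. -/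
def rebase (q : T → V) (h : K ∩ U ⊆ K' ∩ U') :
    C({a : {a // q a ∈ K} // q a.1 ∈ U}, {a : {a // q a ∈ K'} // q a.1 ∈ U'}) :=
  ⟨fun a => ⟨⟨a.1.1, (h ⟨a.1.2, a.2⟩).1⟩, (h ⟨a.1.2, a.2⟩).2⟩, by fun_prop⟩

theorem isFiberHomotopyEquiv_rebase (h : K ∩ U ⊆ K' ∩ U') (h' : K' ∩ U' ⊆ K ∩ U) :
    IsFiberHomotopyEquiv (fun a => q a.1.1) (fun a => q a.1.1) (rebase q h) :=
  .of_inverse (rebase q h') (fun _ => rfl) (fun _ => rfl) (fun _ => rfl)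

end Rebase

/-- Lowers a level to at most `0` during the time `t ∈ [0,1]`, without moving nonpositive levels. -/
def lowerLevel : C(ℝ × I, ℝ) := ⟨fun p => p.1 - p.2 * max p.1 0, by fun_prop⟩

theorem lowerLevel_zero (l : ℝ) : lowerLevel (l, 0) = l := by simp [lowerLevel]

theorem lowerLevel_one_nonpos (l : ℝ) : lowerLevel (l, 1) ≤ 0 := by simp [lowerLevel]

theorem lowerLevel_of_nonpos {l : ℝ} (h : l ≤ 0) (t : I) : lowerLevel (l, t) = l := by
  simp [lowerLevel, max_eq_right h]

/-- The data for extending a model of `proj : T → V` from `oldBase` to `base`. Over `oldBase` the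
map `oldMap` compares `T` with `oldModel`; over `cell` the map `chart`, with its inverse up to
homotopy, compares `T` with `cell × fiber`. The part `0 ≤ level` of `base` lies in `oldBase`, the
part `level ≤ 2` lies in `cell`, and where both hold `attach` is the second coordinate of
`oldMap ∘ chart`. The label space `disk` is convex, contains `fiber` and `0`. -/
structure CylinderGluing (T V W Y : Type) [TopologicalSpace T] [TopologicalSpace V]
    [TopologicalSpace W] [NormedAddCommGroup Y] [NormedSpace ℝ Y] where
  proj : C(T, V)
  oldBase : Set V
  base : Set V
  cell : Set V
  level : C(V, ℝ)
  fiber : Set Y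
  disk : Set Y
  oldModel : Set (V × W)
  oldMap : C({a // proj a ∈ oldBase}, oldModel)
  chart : C(cell × fiber, {a // proj a ∈ cell})
  chartInv : C({a // proj a ∈ cell}, cell × fiber)
  chartHomotopy : C({a // proj a ∈ cell} × I, {a // proj a ∈ cell})
  attach : C(V × Y, W)
  oldBase_subset : oldBase ⊆ base
  mem_oldBase : ∀ x ∈ base, 0 ≤ level x → x ∈ oldBase
  mem_cell : ∀ x ∈ base, level x ≤ 2 → x ∈ cell
  oldModel_fst : ∀ z ∈ oldModel, z.1 ∈ oldBase
  oldMap_equiv : IsFiberHomotopyEquiv (fun a => proj a.1) (fun z => z.1.1) oldMap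
  chart_equiv : IsFiberHomotopyEquiv (fun z => z.1.1) (fun a => proj a.1) chart
  chartInv_equiv : IsFiberHomotopyEquiv (fun a => proj a.1) (fun z => z.1.1) chartInv
  chartHomotopy_zero : ∀ a, chartHomotopy (a, 0) = a
  chartHomotopy_one : ∀ a, chartHomotopy (a, 1) = chart (chartInv a)
  proj_chartHomotopy : ∀ a t, proj (chartHomotopy (a, t)).1 = proj a.1
  attach_eq : ∀ (z : cell × fiber) (hz : proj (chart z).1 ∈ oldBase), z.1.1 ∈ base →
    0 ≤ level z.1.1 → level z.1.1 ≤ 2 → attach (z.1.1, z.2.1) = (oldMap ⟨(chart z).1, hz⟩).1.2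
  fiber_subset : fiber ⊆ disk
  isClosed_fiber : IsClosed fiber
  zero_mem_disk : (0 : Y) ∈ disk
  convex_disk : Convex ℝ disk

namespace CylinderGluing

variable {T V W Y : Type} [TopologicalSpace T] [TopologicalSpace V] [TopologicalSpace W]
  [NormedAddCommGroup Y] [NormedSpace ℝ Y] (d : CylinderGluing T V W Y)

/-- The glued model: a point `(x, w, y, r)` of it has a height `r`, equal to `0` on the old model
thickened by `disk` and to `1` on the new end of the mapping cylinder of `attach`; points of
positive height lie on the graph of `attach`. -/
def model : Set (V × W × Y × ℝ) :=
  {z | z.1 ∈ d.base ∧ z.2.2.1 ∈ d.disk ∧ z.2.2.2 ∈ I ∧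
    (0 ≤ d.level z.1 → (z.1, z.2.1) ∈ d.oldModel) ∧ (0 ≤ d.level z.1 ∨ z.2.2.2 = 1) ∧
    (z.2.2.2 = 0 ∨ (d.level z.1 ≤ 2 ∧ z.2.2.1 ∈ d.fiber ∧ z.2.1 = d.attach (z.1, z.2.2.1)))}

theorem oldMap_chart (z : d.cell × d.fiber) (hz : d.proj (d.chart z).1 ∈ d.oldBase)
    (mem : z.1.1 ∈ d.base) (nonneg : 0 ≤ d.level z.1.1) (le_two : d.level z.1.1 ≤ 2) :
    (d.oldMap ⟨(d.chart z).1, hz⟩).1 = (z.1.1, d.attach (z.1.1, z.2.1)) :=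
  Prod.ext ((d.oldMap_equiv.map_eq _).trans (d.chart_equiv.map_eq z))
    (d.attach_eq z hz mem nonneg le_two).symm

theorem attach_mem_oldModel {x : V} (hx : x ∈ d.base) (nonneg : 0 ≤ d.level x)
    (le_two : d.level x ≤ 2) {y : Y} (hy : y ∈ d.fiber) : (x, d.attach (x, y)) ∈ d.oldModel := by
  let z : d.cell × d.fiber := (⟨x, d.mem_cell x hx le_two⟩, ⟨y, hy⟩)
  have hz : d.proj (d.chart z).1 ∈ d.oldBase :=
    (d.chart_equiv.map_eq z).symm ▸ d.mem_oldBase x hx nonneg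
  exact d.oldMap_chart z hz hx nonneg le_two ▸ (d.oldMap _).2

theorem attach_mem_model {x : V} (hx : x ∈ d.base) (le_two : d.level x ≤ 2) {y : Y}
    (hy : y ∈ d.fiber) {r : ℝ} (hr : r ∈ I) (h : 0 ≤ d.level x ∨ r = 1) :
    (x, d.attach (x, y), y, r) ∈ d.model :=
  ⟨hx, d.fiber_subset hy, hr, fun h0 => d.attach_mem_oldModel hx h0 le_two hy, h,
    .inr ⟨le_two, hy, rfl⟩⟩

theorem oldModel_mem_model {x : V} {w : W} {y : Y} (hx : x ∈ d.base) (nonneg : 0 ≤ d.level x)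
    (hw : (x, w) ∈ d.oldModel) (hy : y ∈ d.disk) : (x, w, y, 0) ∈ d.model :=
  ⟨hx, hy, unitInterval.zero_mem, fun _ => hw, .inl nonneg, .inl rfl⟩

section Lower

/-- The part of `base` over which the model deforms into the new end of the cylinder. -/
def lowerBase : Set V := {x | x ∈ d.base ∧ d.level x < 2}

/-- The part of `base` over which the model contains a mapping cylinder. -/
def band : Set V := {x | x ∈ d.base ∧ 0 ≤ d.level x ∧ d.level x < 2}

theorem band_subset_cell : d.band ⊆ d.cell := fun x hx => d.mem_cell x hx.1 hx.2.2.le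

theorem band_subset_oldBase : d.band ⊆ d.oldBase := fun x hx => d.mem_oldBase x hx.1 hx.2.1

theorem cell_inter_band : d.cell ∩ d.band = d.oldBase ∩ d.band := by
  rw [Set.inter_eq_right.2 d.band_subset_cell, Set.inter_eq_right.2 d.band_subset_oldBase]

/-- The map `oldMap ∘ chart` over `band`. -/
def bandMap : C({z : d.cell × d.fiber // z.1.1 ∈ d.band}, {z : d.oldModel // z.1.1 ∈ d.band}) :=
  ((restrictOver d.oldMap d.oldMap_equiv.map_eq d.band).comp
    (rebase d.proj d.cell_inter_band.subset)).comp
    (restrictOver d.chart d.chart_equiv.map_eq d.band)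

/-- The projection to `V` of the old model over `band`. -/
def bandProj : {z : d.oldModel // z.1.1 ∈ d.band} → V := fun z => z.1.1.1

theorem bandMap_eq (z : {z : d.cell × d.fiber // z.1.1 ∈ d.band}) :
    (d.bandMap z).1.1 = (z.1.1.1, d.attach (z.1.1.1, z.1.2.1)) :=
  d.oldMap_chart z.1 _ z.2.1 z.2.2.1 z.2.2.2.le

theorem isFiberHomotopyEquiv_bandMap :
    IsFiberHomotopyEquiv (fun z => d.bandProj (d.bandMap z)) d.bandProj d.bandMap := by
  have equiv : IsFiberHomotopyEquiv (fun z => z.1.1.1) d.bandProj d.bandMap :=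
    ((d.oldMap_equiv.restrictOver d.band).comp (isFiberHomotopyEquiv_rebase
      d.cell_inter_band.subset d.cell_inter_band.superset)).comp
      (d.chart_equiv.restrictOver d.band)
  rwa [← funext equiv.map_eq] at equiv

/-- The part of the model over `lowerBase`. -/
abbrev Lower : Type := {z : d.model // z.1.1 ∈ {x | d.level x < 2}}

/-- The base coordinate of a point of the model. -/
def point : C(d.Lower, V) := ⟨fun z => z.1.1.1, by fun_prop⟩

/-- The coordinate in `W` of a point of the model. -/
def value : C(d.Lower, W) := ⟨fun z => z.1.1.2.1, by fun_prop⟩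

/-- The coordinate in `disk` of a point of the model. -/
def label : C(d.Lower, Y) := ⟨fun z => z.1.1.2.2.1, by fun_prop⟩

/-- The height in the cylinder of a point of the model. -/
def height : C(d.Lower, ℝ) := ⟨fun z => z.1.1.2.2.2, by fun_prop⟩

/-- The lower half of the cylinder, together with the old model below it. -/
abbrev LowerHalf : Type := {z : d.Lower // d.height z ≤ 1 / 2}

/-- The part of `LowerHalf` lying on the graph of `attach`. -/
abbrev GraphHalf : Type :=
  {z : d.LowerHalf // d.label z ∈ d.fiber ∧ d.value z = d.attach (d.point z, d.label z)}

/-- The new end of the cylinder. -/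
abbrev End : Type := {z : d.cell × d.fiber // z.1.1 ∈ d.lowerBase}

variable {d}

theorem Lower.ext {z z' : d.Lower} (h₁ : d.point z = d.point z') (h₂ : d.value z = d.value z')
    (h₃ : d.label z = d.label z') (h₄ : d.height z = d.height z') : z = z' :=
  Subtype.ext (Subtype.ext (Prod.ext h₁ (Prod.ext h₂ (Prod.ext h₃ h₄))))

theorem point_mem_lowerBase (z : d.Lower) : d.point z ∈ d.lowerBase := ⟨z.1.2.1, z.2⟩

theorem height_mem (z : d.Lower) : d.height z ∈ I := z.1.2.2.2.1

theorem label_mem_disk (z : d.Lower) : d.label z ∈ d.disk := z.1.2.2.1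

theorem graph_of_height_ne_zero {z : d.Lower} (h : d.height z ≠ 0) :
    d.label z ∈ d.fiber ∧ d.value z = d.attach (d.point z, d.label z) :=
  (z.1.2.2.2.2.2.2.resolve_left h).2

theorem graph_of_half_le {z : d.Lower} (h : 1 / 2 ≤ d.height z) :
    d.label z ∈ d.fiber ∧ d.value z = d.attach (d.point z, d.label z) :=
  graph_of_height_ne_zero (by linarith)

theorem level_nonneg {z : d.Lower} (h : d.height z ≠ 1) : 0 ≤ d.level (d.point z) :=
  z.1.2.2.2.2.2.1.resolve_right h

theorem level_nonneg_of_le_half {z : d.Lower} (h : d.height z ≤ 1 / 2) :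
    0 ≤ d.level (d.point z) := level_nonneg (by linarith)

theorem point_mem_band (z : d.LowerHalf) : d.point z ∈ d.band :=
  ⟨(point_mem_lowerBase z.1).1, level_nonneg_of_le_half z.2, (point_mem_lowerBase z.1).2⟩

variable (d)

/-- The projection of the lower half of the cylinder to the old model. -/
def toOldModel : C(d.LowerHalf, {z : d.oldModel // z.1.1 ∈ d.band}) :=
  ⟨fun z => ⟨⟨(d.point z, d.value z), z.1.1.2.2.2.2.1 (level_nonneg_of_le_half z.2)⟩,
    point_mem_band z⟩, by fun_prop⟩

/-- The projection of the graph of `attach` to the source of `bandMap`. -/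
def toBand : C(d.GraphHalf, {z : d.cell × d.fiber // z.1.1 ∈ d.band}) :=
  ⟨fun z => ⟨(⟨d.point z.1, d.band_subset_cell (point_mem_band z.1)⟩, ⟨d.label z.1, z.2.1⟩),
    point_mem_band z.1⟩, by fun_prop⟩

theorem bandMap_toBand (z : d.GraphHalf) : d.bandMap (d.toBand z) = d.toOldModel z := by
  refine Subtype.ext (Subtype.ext ?_)
  rw [bandMap_eq]
  exact Prod.ext rfl z.2.2.symm

open VerticalPathSpace in
theorem exists_slide [T2Space W] : ∃ S : C(d.LowerHalf, VerticalPathSpace d.bandMap d.bandProj),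
    (∀ z, target _ _ (S z) = d.toOldModel z) ∧
      ∀ z : d.GraphHalf, d.height z.1 = 1 / 2 → S z.1 = const _ _ (d.toBand z) := by
  obtain ⟨s, target_s, C, C_zero, C_one, target_C⟩ :=
    isShrinkable_target d.isFiberHomotopyEquiv_bandMap
  have closed_zero : IsClosed {z : d.LowerHalf | d.height z = 0} :=
    isClosed_eq (by fun_prop) (by fun_prop)
  have closed_graph : IsClosed {z : d.LowerHalf | d.label z ∈ d.fiber ∧
      d.value z = d.attach (d.point z, d.label z)} :=
    (d.isClosed_fiber.preimage (f := fun z : d.LowerHalf => d.label z) (by fun_prop)).inter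
      (isClosed_eq (by fun_prop) (by fun_prop))
  let S := glueClosed closed_zero closed_graph
    (fun z => or_iff_not_imp_left.2 graph_of_height_ne_zero)
    (s.comp (d.toOldModel.restrict _))
    (C.comp ⟨fun z => (const _ _ (d.toBand z), clamp (1 - 2 * d.height z.1)), by fun_prop⟩)
    (fun z hz hg => by
      change s _ = C (_, clamp (1 - 2 * d.height z))
      rw [hz, mul_zero, sub_zero, clamp_one, C_one]
      exact congrArg s (d.bandMap_toBand ⟨z, hg⟩).symm)
  have S_zero : ∀ z : d.LowerHalf, d.height z = 0 → S z = s (d.toOldModel z) := fun z hz =>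
    glueClosed_left (P := fun z : d.LowerHalf => d.height z = 0) hz
  have S_graph : ∀ z : d.GraphHalf,
      S z.1 = C (const _ _ (d.toBand z), clamp (1 - 2 * d.height z.1)) :=
    fun z => glueClosed_right (Q := fun z : d.LowerHalf => d.label z ∈ d.fiber ∧
      d.value z = d.attach (d.point z, d.label z)) z.2
  refine ⟨S, fun z => ?_, fun z hz => ?_⟩
  · by_cases hz : d.height z = 0
    · rw [S_zero z hz, target_s]
    · rw [S_graph ⟨z, graph_of_height_ne_zero hz⟩, target_C]
      exact d.bandMap_toBand ⟨z, _⟩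
  · rw [S_graph z, hz, show (1 : ℝ) - 2 * (1 / 2) = 0 by norm_num, clamp_zero, C_zero]
    rfl

variable [T2Space W]

/-- A choice of paths in the old model, from points in the image of `bandMap`, to the points below
the lower half of the cylinder. -/
def slide : C(d.LowerHalf, VerticalPathSpace d.bandMap d.bandProj) := d.exists_slide.choose

/-- The source of the path `slide`. -/
def slideSource : C(d.LowerHalf, {z : d.cell × d.fiber // z.1.1 ∈ d.band}) :=
  (VerticalPathSpace.source _ _).comp d.slide

/-- The path `slide`, traversed backwards. -/
def slidePath : C(d.LowerHalf × I, {z : d.oldModel // z.1.1 ∈ d.band}) :=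
  (VerticalPathSpace.eval _ _).comp ⟨fun z => (d.slide z.1, σ z.2), by fun_prop⟩

theorem slidePath_zero (z : d.LowerHalf) : d.slidePath (z, 0) = d.toOldModel z := by
  rw [← d.exists_slide.choose_spec.1 z]
  exact congrArg (fun t => VerticalPathSpace.eval _ _ (d.slide z, t)) symm_zero

theorem slidePath_one (z : d.LowerHalf) : d.slidePath (z, 1) = d.bandMap (d.slideSource z) := by
  rw [slideSource, ContinuousMap.comp_apply, ← VerticalPathSpace.eval_zero]
  exact congrArg (fun t => VerticalPathSpace.eval _ _ (d.slide z, t)) symm_one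

theorem slideSource_fst (z : d.LowerHalf) : (d.slideSource z).1.1.1 = d.point z := by
  have := VerticalPathSpace.map_target (d.slide z)
  rw [slide, d.exists_slide.choose_spec.1 z] at this
  exact (congrArg Prod.fst (d.bandMap_eq _)).symm.trans this.symm

theorem slidePath_fst (z : d.LowerHalf) (t : I) : (d.slidePath (z, t)).1.1.1 = d.point z :=
  (VerticalPathSpace.map_eval (d.slide z) (σ t)).trans
    ((congrArg Prod.fst (d.bandMap_eq _)).trans (d.slideSource_fst z))

theorem slideSource_of_half (z : d.GraphHalf) (h : d.height z.1 = 1 / 2) :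
    d.slideSource z.1 = d.toBand z :=
  congrArg (VerticalPathSpace.source _ _) (d.exists_slide.choose_spec.2 z h)

theorem slidePath_of_half (z : d.GraphHalf) (h : d.height z.1 = 1 / 2) (t : I) :
    d.slidePath (z.1, t) = d.toOldModel z.1 := by
  rw [← bandMap_toBand]
  exact congrArg (fun p => VerticalPathSpace.eval _ _ (p, σ t)) (d.exists_slide.choose_spec.2 z h)

/-- The retraction of the model over `lowerBase` to the new end of the cylinder. -/
def retraction : C(d.Lower, d.End) :=
  glueLE d.height (.const _ (1 / 2))
    ⟨fun z : d.LowerHalf => ⟨(d.slideSource z).1, (d.slideSource z).2.1, (d.slideSource z).2.2.2⟩,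
      (continuous_subtype_val.comp d.slideSource.continuous).subtype_mk _⟩
    ⟨fun z => ⟨(⟨d.point z.1, d.mem_cell _ (point_mem_lowerBase z.1).1 z.1.2.le⟩,
      ⟨d.label z.1, (graph_of_half_le z.2).1⟩), point_mem_lowerBase z.1⟩, by fun_prop⟩
    fun z h => Subtype.ext
      (congrArg (fun p => p.1) (d.slideSource_of_half ⟨⟨z, h.le⟩, graph_of_half_le h.ge⟩ h))

theorem retraction_of_le_half (z : d.LowerHalf) : (d.retraction z).1 = (d.slideSource z).1 :=
  congrArg Subtype.val (glueLE_left (a := d.height) (b := .const _ (1 / 2)) z.2)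

theorem retraction_of_half_le {z : d.Lower} (h : 1 / 2 ≤ d.height z) :
    (d.retraction z).1.1.1 = d.point z ∧ (d.retraction z).1.2.1 = d.label z := by
  have eq : d.retraction z = _ := glueLE_right (a := d.height) (b := .const _ (1 / 2)) h
  rw [eq]
  exact ⟨rfl, rfl⟩

theorem retraction_fst (z : d.Lower) : (d.retraction z).1.1.1 = d.point z := by
  rcases le_total (d.height z) (1 / 2) with h | h
  · exact (congrArg (fun p => p.1.1) (d.retraction_of_le_half ⟨z, h⟩)).trans
      (d.slideSource_fst ⟨z, h⟩)
  · exact (d.retraction_of_half_le h).1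

end Lower

section LowerDeformation

/-- The inclusion of the new end of the cylinder. -/
def endInclusion : C(d.End, d.Lower) :=
  ⟨fun z => ⟨⟨(z.1.1.1, d.attach (z.1.1.1, z.1.2.1), z.1.2.1, 1),
    d.attach_mem_model z.2.1 z.2.2.le z.1.2.2 unitInterval.one_mem (.inr rfl)⟩, z.2.2⟩, by fun_prop⟩

/-- The height after the lower half of the cylinder has been squeezed to height `0`. -/
def squeezedHeight : C(d.Lower, I) := clamp.comp ⟨fun z => 2 * d.height z - 1, by fun_prop⟩

variable {d}

theorem squeezedHeight_of_le_half {z : d.Lower} (h : d.height z ≤ 1 / 2) :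
    d.squeezedHeight z = 0 := clamp_of_le_zero (by dsimp only [ContinuousMap.coe_mk]; linarith)

theorem squeezedHeight_of_height_eq_one {z : d.Lower} (h : d.height z = 1) :
    d.squeezedHeight z = 1 := clamp_of_one_le (by dsimp only [ContinuousMap.coe_mk]; linarith)

theorem update_height_mem_model (z : d.Lower) {r : ℝ} (hr : r ∈ I)
    (h_zero : d.height z = 0 → r = 0) (h_one : d.height z = 1 → r = 1) :
    (d.point z, d.value z, d.label z, r) ∈ d.model := by
  obtain ⟨base_mem, label_mem, -, old, low, graph⟩ := z.1.2
  exact ⟨base_mem, label_mem, hr, old, low.imp_right h_one, graph.imp_left h_zero⟩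

theorem squeeze_mem (z : d.Lower) (t : I) : (d.point z, d.value z, d.label z,
    AffineMap.lineMap (d.height z) (d.squeezedHeight z : ℝ) (t : ℝ)) ∈ d.model := by
  refine update_height_mem_model z
    ((convex_Icc _ _).lineMap_mem (height_mem z) (d.squeezedHeight z).2 t.2) (fun h => ?_)
    (fun h => ?_)
  · rw [squeezedHeight_of_le_half (by rw [h]; norm_num), h]; simp
  · rw [squeezedHeight_of_height_eq_one h, h]; simp

variable (d)

/-- The homotopy squeezing the lower half of the cylinder to height `0`. -/
def squeeze : C(d.Lower × I, d.Lower) :=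
  ⟨fun p => ⟨⟨_, squeeze_mem p.1 p.2⟩, p.1.2⟩, by
    simp only [AffineMap.lineMap_apply_module]; fun_prop⟩

theorem squeeze_zero (z : d.Lower) : d.squeeze (z, 0) = z :=
  Lower.ext rfl rfl rfl (by simp [squeeze, height])

theorem height_squeeze_one (z : d.Lower) : d.height (d.squeeze (z, 1)) = d.squeezedHeight z := by
  simp [squeeze, height]

variable [T2Space W]

theorem slide_mem (z : d.LowerHalf) (t : I) : (d.point z, (d.slidePath (z, t)).1.1.2,
    AffineMap.lineMap (d.label z) ((d.slideSource z).1.2 : Y) (t : ℝ), (0 : ℝ)) ∈ d.model := by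
  refine d.oldModel_mem_model (point_mem_lowerBase z.1).1 (level_nonneg_of_le_half z.2) ?_
    (d.convex_disk.lineMap_mem (label_mem_disk z.1) (d.fiber_subset (d.slideSource z).1.2.2) t.2)
  rw [← d.slidePath_fst z t]
  exact (d.slidePath (z, t)).1.2

/-- The homotopy of the squeezed model which moves its part at height `0` along `slidePath`. -/
def slideHomotopy : C(d.Lower × I, d.Lower) :=
  glueLE (d.height.comp ContinuousMap.fst) (.const _ (1 / 2))
    ⟨fun p => ⟨⟨_, d.slide_mem ⟨p.1.1, p.2⟩ p.1.2⟩, p.1.1.2⟩, by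
      simp only [AffineMap.lineMap_apply_module]
      fun_prop⟩
    (((stage d.squeeze 1).comp ContinuousMap.fst).restrict _)
    (by
      rintro ⟨z, t⟩ (h : d.height z = 1 / 2)
      have slidePath_eq := d.slidePath_of_half ⟨⟨z, h.le⟩, graph_of_half_le h.ge⟩ h t
      have slideSource_eq := d.slideSource_of_half ⟨⟨z, h.le⟩, graph_of_half_le h.ge⟩ h
      refine Lower.ext rfl (congrArg (fun p => p.1.1.2) slidePath_eq) ?_ ?_
      · change AffineMap.lineMap (d.label z) ((d.slideSource ⟨z, h.le⟩).1.2 : Y) (t : ℝ) = d.label z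
        rw [slideSource_eq]
        exact AffineMap.lineMap_same_apply _ _
      · exact ((height_squeeze_one d z).trans (by rw [squeezedHeight_of_le_half h.le]; rfl)).symm)

variable {d} in
theorem slideHomotopy_of_le_half (z : d.LowerHalf) (t : I) :
    d.slideHomotopy (z, t) = ⟨⟨_, d.slide_mem z t⟩, z.1.2⟩ :=
  glueLE_left (a := d.height.comp ContinuousMap.fst) (b := .const _ (1 / 2)) z.2

variable {d} in
theorem slideHomotopy_of_half_le {z : d.Lower} (h : 1 / 2 ≤ d.height z) (t : I) :
    d.slideHomotopy (z, t) = d.squeeze (z, 1) :=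
  glueLE_right (a := d.height.comp ContinuousMap.fst) (b := .const _ (1 / 2)) h

theorem point_slideHomotopy (z : d.Lower) (t : I) :
    d.point (d.slideHomotopy (z, t)) = d.point z := by
  rcases le_total (d.height z) (1 / 2) with h | h
  · rw [slideHomotopy_of_le_half ⟨z, h⟩]; rfl
  · rw [slideHomotopy_of_half_le h]; rfl

theorem slideHomotopy_zero (z : d.Lower) : d.slideHomotopy (z, 0) = d.squeeze (z, 1) := by
  rcases le_total (d.height z) (1 / 2) with h | h
  · rw [slideHomotopy_of_le_half ⟨z, h⟩]
    refine Lower.ext rfl ?_ (AffineMap.lineMap_apply_zero _ _) ?_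
    · exact congrArg (fun p => p.1.1.2) (d.slidePath_zero ⟨z, h⟩)
    · rw [height_squeeze_one, squeezedHeight_of_le_half h]; rfl
  · exact slideHomotopy_of_half_le h 0

theorem raise_mem (z : d.Lower) (t : I) : ((d.retraction z).1.1.1,
    d.attach ((d.retraction z).1.1.1, (d.retraction z).1.2.1), ((d.retraction z).1.2 : Y),
    AffineMap.lineMap (d.squeezedHeight z : ℝ) 1 (t : ℝ)) ∈ d.model := by
  refine d.attach_mem_model (d.retraction z).2.1 (d.retraction z).2.2.le (d.retraction z).1.2.2
    ((convex_Icc _ _).lineMap_mem (d.squeezedHeight z).2 unitInterval.one_mem t.2) ?_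
  rw [retraction_fst]
  by_cases h : d.height z = 1
  · exact .inr (by simp [squeezedHeight_of_height_eq_one h])
  · exact .inl (level_nonneg h)

/-- The homotopy raising points of the cylinder to its new end. -/
def raise : C(d.Lower × I, d.Lower) :=
  ⟨fun p => ⟨⟨_, d.raise_mem p.1 p.2⟩, (d.retraction p.1).2.2⟩, by
    simp only [AffineMap.lineMap_apply_module]; fun_prop⟩

theorem raise_zero (z : d.Lower) : d.raise (z, 0) = d.slideHomotopy (z, 1) := by
  rcases le_total (d.height z) (1 / 2) with h | h
  · rw [slideHomotopy_of_le_half ⟨z, h⟩]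
    have retraction_eq := d.retraction_of_le_half ⟨z, h⟩
    refine Lower.ext (d.retraction_fst z) ?_ ?_ ?_
    · change d.attach _ = (d.slidePath (⟨z, h⟩, 1)).1.1.2
      rw [slidePath_one, bandMap_eq, retraction_eq]
    · exact (congrArg (fun p => (p.2 : Y)) retraction_eq).trans
        (AffineMap.lineMap_apply_one (k := ℝ) _ _).symm
    · exact (AffineMap.lineMap_apply_zero _ _).trans (by rw [squeezedHeight_of_le_half h]; rfl)
  · rw [slideHomotopy_of_half_le h]
    obtain ⟨fst_eq, snd_eq⟩ := d.retraction_of_half_le h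
    refine Lower.ext fst_eq ?_ snd_eq
      ((AffineMap.lineMap_apply_zero _ _).trans (height_squeeze_one d z).symm)
    change d.attach _ = d.value z
    rw [fst_eq, snd_eq, (graph_of_half_le h).2]

theorem raise_one (z : d.Lower) : d.raise (z, 1) = d.endInclusion (d.retraction z) :=
  Lower.ext rfl rfl rfl (AffineMap.lineMap_apply_one _ _)

theorem retraction_endInclusion (z : d.End) : d.retraction (d.endInclusion z) = z := by
  have half_le : 1 / 2 ≤ d.height (d.endInclusion z) :=
    show (1 / 2 : ℝ) ≤ 1 by norm_num
  obtain ⟨fst_eq, snd_eq⟩ := d.retraction_of_half_le half_le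
  exact Subtype.ext (Prod.ext (Subtype.ext fst_eq) (Subtype.ext snd_eq))

theorem isFiberHomotopyEquiv_endInclusion :
    IsFiberHomotopyEquiv (fun z => z.1.1.1) d.point d.endInclusion := by
  refine ⟨fun _ => rfl, d.retraction, d.retraction_fst, .of_eq d.retraction_endInclusion, .symm ?_⟩
  have squeeze : FiberwiseHomotopic d.point (.id _) (stage d.squeeze 1) :=
    ⟨d.squeeze, d.squeeze_zero, fun _ => rfl, fun _ _ => rfl⟩
  have slide : FiberwiseHomotopic d.point (stage d.squeeze 1) (stage d.slideHomotopy 1) :=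
    ⟨d.slideHomotopy, d.slideHomotopy_zero, fun _ => rfl, d.point_slideHomotopy⟩
  have raise : FiberwiseHomotopic d.point (stage d.slideHomotopy 1)
      (d.endInclusion.comp d.retraction) :=
    ⟨d.raise, d.raise_zero, d.raise_one, fun z _ =>
      (d.retraction_fst z).trans (d.point_slideHomotopy z 1).symm⟩
  exact squeeze.trans (slide.trans raise)

end LowerDeformation

section ModelMap

/-- The part of `T` over `base`. -/
abbrev Total : Type := {a // d.proj a ∈ d.base}

/-- The part of `T` on which `chartInv` is defined. -/
abbrev TotalLow : Type := {a : d.Total // d.level (d.proj a.1) ≤ 2}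

/-- The inclusion of `TotalLow` into the part of `T` over `cell`. -/
def toCell : C(d.TotalLow, {a // d.proj a ∈ d.cell}) :=
  ⟨fun a => ⟨a.1.1, d.mem_cell _ a.1.2 a.2⟩, by fun_prop⟩

/-- The coordinate in `fiber` of a point of `T`. -/
def chartLabel : C(d.TotalLow, d.fiber) := (ContinuousMap.snd.comp d.chartInv).comp d.toCell

/-- The level of the projection of a point of `T`, lowered during the time `t`. -/
def levelAt : C(d.TotalLow × I, ℝ) :=
  ⟨fun p => lowerLevel (d.level (d.proj p.1.1.1), p.2), by fun_prop⟩

/-- Moves points of `T` towards the image of `chart`, the more the lower their level. -/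
def straighten : C(d.TotalLow × I, {a // d.proj a ∈ d.cell}) :=
  d.chartHomotopy.comp ⟨fun p => (d.toCell p.1, clamp (2 - d.levelAt p)), by fun_prop⟩

theorem proj_straighten (p : d.TotalLow × I) : d.proj (d.straighten p).1 = d.proj p.1.1.1 :=
  d.proj_chartHomotopy _ _

variable {d}

theorem straighten_mem {p : d.TotalLow × I} (h : 0 ≤ d.level (d.proj p.1.1.1)) :
    d.proj (d.straighten p).1 ∈ d.oldBase :=
  d.proj_straighten p ▸ d.mem_oldBase _ p.1.1.2 h

theorem oldMap_straighten {p : d.TotalLow × I} (h : 0 ≤ d.level (d.proj p.1.1.1))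
    (le_one : d.levelAt p ≤ 1) : (d.oldMap ⟨(d.straighten p).1, straighten_mem h⟩).1.2 =
      d.attach (d.proj p.1.1.1, (d.chartLabel p.1).1) := by
  have straighten_eq : d.straighten p = d.chart (d.chartInv (d.toCell p.1)) := by
    change d.chartHomotopy (_, clamp (2 - d.levelAt p)) = _
    rw [clamp_of_one_le (by linarith), chartHomotopy_one]
  have fst_eq : (d.chartInv (d.toCell p.1)).1.1 = d.proj p.1.1.1 := d.chartInv_equiv.map_eq _
  have attach_eq := d.attach_eq (d.chartInv (d.toCell p.1))
    (straighten_eq ▸ straighten_mem h) (fst_eq ▸ p.1.1.2) (fst_eq ▸ h) (fst_eq ▸ p.1.2)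
  rw [fst_eq] at attach_eq
  simp only [straighten_eq]
  exact attach_eq.symm

variable (d)

/-- The coordinate in `W` of `liftHomotopy`. -/
def liftValue : C(d.TotalLow × I, W) :=
  glueLE (.const _ 0) ⟨fun p => d.level (d.proj p.1.1.1), by fun_prop⟩
    ⟨fun p => (d.oldMap ⟨(d.straighten p.1).1, straighten_mem p.2⟩).1.2, by fun_prop⟩
    ⟨fun p => d.attach (d.proj p.1.1.1.1, (d.chartLabel p.1.1).1), by fun_prop⟩
    fun p h => oldMap_straighten h.le (by
      have level_eq : d.level (d.proj p.1.1.1) = 0 := h.symm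
      change lowerLevel (d.level (d.proj p.1.1.1), p.2) ≤ 1
      rw [level_eq, lowerLevel_of_nonpos le_rfl]
      exact zero_le_one)

variable {d}

theorem liftValue_of_nonneg {p : d.TotalLow × I} (h : 0 ≤ d.level (d.proj p.1.1.1)) :
    d.liftValue p = (d.oldMap ⟨(d.straighten p).1, straighten_mem h⟩).1.2 :=
  glueLE_left (a := .const _ 0) (b := ⟨fun p : d.TotalLow × I => d.level (d.proj p.1.1.1), _⟩) h

theorem liftValue_of_levelAt_le_one {p : d.TotalLow × I} (h : d.levelAt p ≤ 1) :
    d.liftValue p = d.attach (d.proj p.1.1.1, (d.chartLabel p.1).1) := by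
  rcases le_total 0 (d.level (d.proj p.1.1.1)) with h0 | h0
  · rw [liftValue_of_nonneg h0, oldMap_straighten h0 h]
  · exact glueLE_right (a := .const _ 0)
      (b := ⟨fun p : d.TotalLow × I => d.level (d.proj p.1.1.1), _⟩) h0

theorem oldMap_mem_oldModel {a : {a // d.proj a ∈ d.oldBase}} {x : V} (h : d.proj a.1 = x) :
    (x, (d.oldMap a).1.2) ∈ d.oldModel := by
  rw [← h, ← d.oldMap_equiv.map_eq a]
  exact (d.oldMap a).2

theorem liftHomotopy_mem (p : d.TotalLow × I) : (d.proj p.1.1.1, d.liftValue p,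
    (clamp (2 - d.levelAt p) : ℝ) • (d.chartLabel p.1 : Y), (clamp (1 - d.levelAt p) : ℝ)) ∈
      d.model := by
  refine ⟨p.1.1.2, d.convex_disk.smul_mem_of_zero_mem d.zero_mem_disk
    (d.fiber_subset (d.chartLabel p.1).2) (clamp _).2, (clamp _).2, fun h => ?_, ?_, ?_⟩
  · rw [liftValue_of_nonneg h]
    exact oldMap_mem_oldModel (d.proj_straighten p)
  · refine (le_total 0 (d.level (d.proj p.1.1.1))).imp_right fun h => ?_
    have levelAt_eq : d.levelAt p = d.level (d.proj p.1.1.1) := lowerLevel_of_nonpos h _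
    exact congrArg Subtype.val (clamp_of_one_le (r := 1 - d.levelAt p) (by linarith))
  · rcases le_total 1 (d.levelAt p) with h | h
    · exact .inl (congrArg Subtype.val (clamp_of_le_zero (r := 1 - d.levelAt p) (by linarith)))
    · rw [clamp_of_one_le (r := 2 - d.levelAt p) (by linarith), Set.Icc.coe_one, one_smul]
      exact .inr ⟨p.1.2, (d.chartLabel p.1).2, liftValue_of_levelAt_le_one h⟩

variable (d)

/-- The comparison map to the model at levels at most `2`, and a homotopy of it into the new end of
the cylinder. -/
def liftHomotopy : C(d.TotalLow × I, d.model) := ⟨fun p => ⟨_, liftHomotopy_mem p⟩, by fun_prop⟩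

theorem liftHomotopy_one (a : d.TotalLow) : (d.liftHomotopy (a, 1)).1 =
    (d.proj a.1.1, d.attach (d.proj a.1.1, (d.chartLabel a).1), (d.chartLabel a).1, 1) := by
  have level_nonpos : d.levelAt (a, 1) ≤ 0 := lowerLevel_one_nonpos _
  have value_eq := liftValue_of_levelAt_le_one (level_nonpos.trans zero_le_one)
  have label_time : clamp (2 - d.levelAt (a, 1)) = 1 := clamp_of_one_le (by linarith)
  have height_time : clamp (1 - d.levelAt (a, 1)) = 1 := clamp_of_one_le (by linarith)
  simp [liftHomotopy, value_eq, label_time, height_time]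

theorem upper_mem (a : d.Total) (h : 2 ≤ d.level (d.proj a.1)) :
    (d.proj a.1, (d.oldMap ⟨a.1, d.mem_oldBase _ a.2 (zero_le_two.trans h)⟩).1.2, (0 : Y), (0 : ℝ))
      ∈ d.model :=
  d.oldModel_mem_model a.2 (zero_le_two.trans h) (oldMap_mem_oldModel rfl) d.zero_mem_disk

/-- The comparison map to the model. -/
def modelMap : C(d.Total, d.model) :=
  glueLE ⟨fun a => d.level (d.proj a.1), by fun_prop⟩ (.const _ 2)
    ⟨fun a => d.liftHomotopy (a, 0), by fun_prop⟩ ⟨fun a => ⟨_, d.upper_mem a.1 a.2⟩, by fun_prop⟩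
    (by
      intro a (h : d.level (d.proj a.1) = 2)
      let a' : d.TotalLow := ⟨a, h.le⟩
      have levelAt_eq : d.levelAt (a', 0) = 2 := (lowerLevel_zero _).trans h
      have label_time : clamp (2 - d.levelAt (a', 0)) = 0 := clamp_of_le_zero (by linarith)
      have height_time : clamp (1 - d.levelAt (a', 0)) = 0 := clamp_of_le_zero (by linarith)
      have straighten_eq : d.straighten (a', 0) = d.toCell a' := by
        change d.chartHomotopy (_, clamp _) = _
        rw [label_time, chartHomotopy_zero]
      have value_eq := liftValue_of_nonneg (p := (a', 0)) (zero_le_two.trans h.ge)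
      simp only [straighten_eq] at value_eq
      refine Subtype.ext (Prod.ext rfl (Prod.ext value_eq (Prod.ext ?_ ?_)))
      · change (clamp (2 - d.levelAt (a', 0)) : ℝ) • (d.chartLabel a' : Y) = 0
        simp [label_time]
      · change (clamp (1 - d.levelAt (a', 0)) : ℝ) = 0
        simp [height_time])

variable {d}

theorem modelMap_of_le_two (a : d.TotalLow) : d.modelMap a = d.liftHomotopy (a, 0) :=
  glueLE_left (a := ⟨fun a : d.Total => d.level (d.proj a.1), _⟩) (b := .const _ 2) a.2

theorem modelMap_of_two_le {a : d.Total} (h : 2 ≤ d.level (d.proj a.1)) :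
    d.modelMap a = ⟨_, d.upper_mem a h⟩ :=
  glueLE_right (a := ⟨fun a : d.Total => d.level (d.proj a.1), _⟩) (b := .const _ 2) h

theorem modelMap_fst (a : d.Total) : (d.modelMap a).1.1 = d.proj a.1 := by
  rcases le_total (d.level (d.proj a.1)) 2 with h | h
  · rw [modelMap_of_le_two ⟨a, h⟩]; rfl
  · rw [modelMap_of_two_le h]

end ModelMap

section Upper

/-- The part of `V` over which the model deforms into the old model. -/
def upperBase : Set V := {x | 0 < d.level x}

/-- The projection of the model over `upperBase` to the old model. -/
def forgetCylinder : C({z : d.model // z.1.1 ∈ d.upperBase},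
    {z : d.oldModel // z.1.1 ∈ d.upperBase}) :=
  ⟨fun z => ⟨⟨(z.1.1.1, z.1.1.2.1), z.1.2.2.2.2.1 z.2.le⟩, z.2⟩, by fun_prop⟩

/-- The inclusion of the old model over `upperBase` into the model. -/
def oldModelInclusion : C({z : d.oldModel // z.1.1 ∈ d.upperBase},
    {z : d.model // z.1.1 ∈ d.upperBase}) :=
  ⟨fun z => ⟨⟨(z.1.1.1, z.1.1.2, 0, 0), d.oldModel_mem_model (d.oldBase_subset
    (d.oldModel_fst _ z.1.2)) z.2.le z.1.2 d.zero_mem_disk⟩, z.2⟩, by fun_prop⟩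

theorem collapseHeight_mem (z : {z : d.model // z.1.1 ∈ d.upperBase}) (t : I) :
    (z.1.1.1, z.1.1.2.1, z.1.1.2.2.1, (σ t : ℝ) * z.1.1.2.2.2) ∈ d.model := by
  obtain ⟨⟨⟨x, w, y, r⟩, hx, hy, hr, h_old, -, h_graph⟩, h_level⟩ := z
  exact ⟨hx, hy, unitInterval.mul_mem (σ t).2 hr, h_old, .inl h_level.le,
    h_graph.imp_left fun h => mul_eq_zero_of_right _ h⟩

/-- The homotopy moving the model over `upperBase` to height `0`. -/
def collapseHeight : C({z : d.model // z.1.1 ∈ d.upperBase} × I,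
    {z : d.model // z.1.1 ∈ d.upperBase}) :=
  ⟨fun p => ⟨⟨_, d.collapseHeight_mem p.1 p.2⟩, p.1.2⟩, by fun_prop⟩

/-- The homotopy contracting `disk` in the part of height `0` of the model over `upperBase`. -/
def collapseDisk : C({z : d.model // z.1.1 ∈ d.upperBase} × I,
    {z : d.model // z.1.1 ∈ d.upperBase}) :=
  ⟨fun p => ⟨⟨(p.1.1.1.1, p.1.1.1.2.1, (σ p.2 : ℝ) • p.1.1.1.2.2.1, 0),
    d.oldModel_mem_model p.1.1.2.1 p.1.2.le (p.1.1.2.2.2.2.1 p.1.2.le)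
      (d.convex_disk.smul_mem_of_zero_mem d.zero_mem_disk p.1.1.2.2.1 (σ p.2).2)⟩, p.1.2⟩,
    by fun_prop⟩

theorem isFiberHomotopyEquiv_forgetCylinder :
    IsFiberHomotopyEquiv (fun z => z.1.1.1) (fun z => z.1.1.1) d.forgetCylinder := by
  refine ⟨fun _ => rfl, d.oldModelInclusion, fun _ => rfl, .symm ?_, .of_eq fun _ => rfl⟩
  have height : FiberwiseHomotopic (fun z => z.1.1.1) (.id _) (stage d.collapseHeight 1) :=
    ⟨d.collapseHeight, fun z => Subtype.ext (Subtype.ext (by simp [collapseHeight])),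
      fun _ => rfl, fun _ _ => rfl⟩
  have disk : FiberwiseHomotopic (fun z => z.1.1.1) (stage d.collapseHeight 1)
      (d.oldModelInclusion.comp d.forgetCylinder) :=
    ⟨d.collapseDisk, fun z => Subtype.ext (Subtype.ext (by simp [collapseHeight, collapseDisk])),
      fun z => Subtype.ext (Subtype.ext
        (by simp [collapseDisk, oldModelInclusion, forgetCylinder])), fun _ _ => rfl⟩
  exact height.trans disk

/-- The part of `T` over `base` and `upperBase`. -/
abbrev TotalUpper : Type := {a : d.Total // d.proj a.1 ∈ d.upperBase}

theorem base_inter_upperBase : d.base ∩ d.upperBase = d.oldBase ∩ d.upperBase :=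
  Set.Subset.antisymm (fun x hx => ⟨d.mem_oldBase x hx.1 hx.2.le, hx.2⟩)
    (Set.inter_subset_inter_left _ d.oldBase_subset)

/-- The homotopy, over `upperBase`, from the identity to the time `0` part of `straighten`, extended
by the identity at levels at least `2`. -/
def straightenUpper : C(d.TotalUpper × I, {a // d.proj a ∈ d.oldBase}) :=
  glueLE ⟨fun p => d.level (d.proj p.1.1.1), by fun_prop⟩ (.const _ 2)
    ⟨fun p => ⟨(d.chartHomotopy (d.toCell ⟨p.1.1.1, p.2⟩,
        p.1.2 * clamp (2 - d.level (d.proj p.1.1.1.1)))).1, by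
      rw [proj_chartHomotopy]; exact d.mem_oldBase _ p.1.1.1.2 p.1.1.2.le⟩, by fun_prop⟩
    ⟨fun p => ⟨p.1.1.1.1, d.mem_oldBase _ p.1.1.1.2 p.1.1.2.le⟩, by fun_prop⟩ (by
      rintro ⟨a, t⟩ (h : d.level (d.proj a.1.1) = 2)
      refine Subtype.ext ?_
      change (d.chartHomotopy (_, t * clamp (2 - d.level (d.proj a.1.1)))).1 = a.1.1
      rw [clamp_of_le_zero (by linarith), mul_zero, chartHomotopy_zero]
      rfl)

variable {d}

theorem straightenUpper_of_le_two {a : d.TotalUpper} (h : d.level (d.proj a.1.1) ≤ 2) (t : I) :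
    (d.straightenUpper (a, t)).1 = (d.chartHomotopy (d.toCell ⟨a.1, h⟩,
      t * clamp (2 - d.level (d.proj a.1.1)))).1 :=
  congrArg Subtype.val (glueLE_left
    (a := ⟨fun p : d.TotalUpper × I => d.level (d.proj p.1.1.1), _⟩) (b := .const _ 2)
    (x := (a, t)) h)

theorem straightenUpper_of_two_le {a : d.TotalUpper} (h : 2 ≤ d.level (d.proj a.1.1)) (t : I) :
    (d.straightenUpper (a, t)).1 = a.1.1 :=
  congrArg Subtype.val (glueLE_right
    (a := ⟨fun p : d.TotalUpper × I => d.level (d.proj p.1.1.1), _⟩) (b := .const _ 2)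
    (x := (a, t)) h)

theorem proj_straightenUpper (a : d.TotalUpper) (t : I) :
    d.proj (d.straightenUpper (a, t)).1 = d.proj a.1.1 := by
  rcases le_total (d.level (d.proj a.1.1)) 2 with h | h
  · rw [straightenUpper_of_le_two h, proj_chartHomotopy]; rfl
  · rw [straightenUpper_of_two_le h]

theorem straightenUpper_zero (a : d.TotalUpper) : (d.straightenUpper (a, 0)).1 = a.1.1 := by
  rcases le_total (d.level (d.proj a.1.1)) 2 with h | h
  · rw [straightenUpper_of_le_two h, zero_mul, chartHomotopy_zero]; rfl
  · exact straightenUpper_of_two_le h 0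

theorem oldMap_straightenUpper_one (a : d.TotalUpper) :
    (d.oldMap (d.straightenUpper (a, 1))).1 = (d.proj a.1.1, (d.modelMap a.1).1.2.1) := by
  refine Prod.ext ((d.oldMap_equiv.map_eq _).trans (proj_straightenUpper a 1)) ?_
  rcases le_total (d.level (d.proj a.1.1)) 2 with h | h
  · rw [modelMap_of_le_two ⟨a.1, h⟩]
    change _ = d.liftValue _
    rw [liftValue_of_nonneg a.2.le]
    refine congrArg (fun a => (d.oldMap a).1.2) (Subtype.ext ?_)
    rw [straightenUpper_of_le_two h, one_mul]
    simp only [straighten, levelAt, ContinuousMap.comp_apply, ContinuousMap.coe_mk,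
      lowerLevel_zero]
  · rw [modelMap_of_two_le h]
    exact congrArg (fun a => (d.oldMap a).1.2) (Subtype.ext (straightenUpper_of_two_le h 1))

theorem isFiberHomotopyEquiv_modelMap_upper :
    IsFiberHomotopyEquiv (fun a => d.proj a.1.1) (fun z => z.1.1.1)
      (restrictOver (p := fun a => d.proj a.1) (q := fun z => z.1.1) d.modelMap modelMap_fst
        d.upperBase) := by
  refine .of_comp_left ?_ d.isFiberHomotopyEquiv_forgetCylinder
  refine ((d.oldMap_equiv.restrictOver d.upperBase).comp (isFiberHomotopyEquiv_rebase
    d.base_inter_upperBase.subset d.base_inter_upperBase.superset)).congr ?_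
  have oldMap_fst : ∀ a t, (d.oldMap (d.straightenUpper (a, t))).1.1 = d.proj a.1.1 := fun a t =>
    (d.oldMap_equiv.map_eq _).trans (proj_straightenUpper a t)
  have mem_upperBase : ∀ p : d.TotalUpper × I,
      (d.oldMap (d.straightenUpper p)).1.1 ∈ d.upperBase := fun p => by
    rw [oldMap_fst]
    exact p.1.2
  refine ⟨⟨fun p => ⟨d.oldMap (d.straightenUpper p), mem_upperBase p⟩, by fun_prop⟩, fun a => ?_,
    fun a => ?_, fun a t => (oldMap_fst a t).trans (Eq.symm (d.oldMap_equiv.map_eq _))⟩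
  · exact Subtype.ext (congrArg d.oldMap (Subtype.ext (straightenUpper_zero a)))
  · refine Subtype.ext (Subtype.ext ((oldMap_straightenUpper_one a).trans ?_))
    exact Prod.ext (modelMap_fst a.1).symm rfl

end Upper

theorem base_inter_lower :
    d.base ∩ {x | d.level x < 2} = d.cell ∩ d.lowerBase :=
  Set.Subset.antisymm (fun x hx => ⟨d.mem_cell x hx.1 hx.2.le, hx⟩) fun _ hx => hx.2

variable {d}

theorem isFiberHomotopyEquiv_modelMap_lower [T2Space W] :
    IsFiberHomotopyEquiv (fun a => d.proj a.1.1) (fun z => z.1.1.1)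
      (restrictOver (p := fun a => d.proj a.1) (q := fun z => z.1.1) d.modelMap modelMap_fst
        {x | d.level x < 2}) := by
  refine ((d.isFiberHomotopyEquiv_endInclusion.comp
    (d.chartInv_equiv.restrictOver d.lowerBase)).comp (isFiberHomotopyEquiv_rebase
      d.base_inter_lower.subset d.base_inter_lower.superset)).congr (.symm ?_)
  refine ⟨⟨fun p => ⟨d.liftHomotopy (⟨p.1.1, p.1.2.le⟩, p.2), p.1.2⟩, by fun_prop⟩,
    fun a => Subtype.ext (modelMap_of_le_two ⟨a.1, a.2.le⟩).symm, fun a => ?_,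
    fun a _ => (modelMap_fst a.1).symm⟩
  refine Subtype.ext (Subtype.ext ((d.liftHomotopy_one ⟨a.1, a.2.le⟩).trans ?_))
  have fst_eq : (d.chartInv (d.toCell ⟨a.1, a.2.le⟩)).1.1 = d.proj a.1.1 :=
    d.chartInv_equiv.map_eq _
  exact congrArg (fun x => (x, d.attach (x, (d.chartLabel ⟨a.1, a.2.le⟩).1),
    (d.chartLabel ⟨a.1, a.2.le⟩).1, (1 : ℝ))) fst_eq.symm

variable (d)

theorem isFiberHomotopyEquiv_modelMap [T2Space W] :
    IsFiberHomotopyEquiv (fun a => d.proj a.1) (fun z => z.1.1) d.modelMap :=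
  .of_restrictOver (by fun_prop) d.modelMap modelMap_fst d.level zero_lt_two
    isFiberHomotopyEquiv_modelMap_upper isFiberHomotopyEquiv_modelMap_lower

end CylinderGluing

/-! ### Compact models -/

section Pieces

variable {V W Y : Type*}

/-- The product of `R` with the graph of `g` over `X × F`. -/
def graphCylinder (F : Set Y) (g : V × Y → W) (X : Set V) (R : Set ℝ) : Set (V × W × Y × ℝ) :=
  {z | z.1 ∈ X ∧ z.2.2.1 ∈ F ∧ z.2.1 = g (z.1, z.2.2.1) ∧ z.2.2.2 ∈ R}

theorem graphCylinder_eq_image (F : Set Y) (g : V × Y → W) (X : Set V) (R : Set ℝ) :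
    graphCylinder F g X R =
      (fun p : V × Y × ℝ => (p.1, g (p.1, p.2.1), p.2.1, p.2.2)) '' (X ×ˢ F ×ˢ R) := by
  ext ⟨x, w, y, r⟩
  constructor
  · rintro ⟨hx, hy, hw, hr⟩
    exact ⟨(x, y, r), ⟨hx, hy, hr⟩, Prod.ext rfl (Prod.ext hw.symm rfl)⟩
  · rintro ⟨⟨x', y', r'⟩, ⟨hx, hy, hr⟩, h⟩
    cases h
    exact ⟨hx, hy, rfl, hr⟩

/-- The product of `E` and `D`, placed at height `0`. -/
def slab (E : Set (V × W)) (D : Set Y) : Set (V × W × Y × ℝ) :=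
  {z | (z.1, z.2.1) ∈ E ∧ z.2.2.1 ∈ D ∧ z.2.2.2 = 0}

theorem slab_eq_image (E : Set (V × W)) (D : Set Y) :
    slab E D = (fun p : (V × W) × Y => (p.1.1, p.1.2, p.2, (0 : ℝ))) '' (E ×ˢ D) := by
  ext ⟨x, w, y, r⟩
  constructor
  · rintro ⟨hw, hy, rfl⟩
    exact ⟨((x, w), y), ⟨hw, hy⟩, rfl⟩
  · rintro ⟨⟨⟨x', w'⟩, y'⟩, ⟨hw, hy⟩, h⟩
    cases h
    exact ⟨hw, hy, rfl⟩

variable [TopologicalSpace V] [TopologicalSpace W] [TopologicalSpace Y]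

theorem isCompact_graphCylinder {F : Set Y} {g : V × Y → W} (hg : Continuous g) {X : Set V}
    {R : Set ℝ} (hX : IsCompact X) (hF : IsCompact F) (hR : IsCompact R) :
    IsCompact (graphCylinder F g X R) := by
  rw [graphCylinder_eq_image]
  exact (hX.prod (hF.prod hR)).image (by fun_prop)

theorem isANE_graphCylinder {F : Set Y} {g : V × Y → W} (hg : Continuous g) {X : Set V}
    {R : Set ℝ} (hX : IsANE X) (hF : IsANE F) (hR : IsANE R) : IsANE (graphCylinder F g X R) := by
  refine (hX.prod (hF.prod hR)).of_rightInvOn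
    (r := fun p => (p.1, g (p.1, p.2.1), p.2.1, p.2.2)) (i := fun z => (z.1, z.2.2.1, z.2.2.2))
    (by fun_prop) (by fun_prop) (fun p hp => ⟨hp.1, hp.2.1, rfl, hp.2.2⟩)
    (fun z hz => ⟨hz.1, hz.2.1, hz.2.2.2⟩)
    fun z hz => Prod.ext rfl (Prod.ext hz.2.2.1.symm rfl)

theorem isCompact_slab {E : Set (V × W)} {D : Set Y} (hE : IsCompact E) (hD : IsCompact D) :
    IsCompact (slab E D) := by
  rw [slab_eq_image]
  exact (hE.prod hD).image (by fun_prop)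

theorem isANE_slab {E : Set (V × W)} {D : Set Y} (hE : IsANE E) (hD : IsANE D) :
    IsANE (slab E D) := by
  refine (hE.prod hD).of_rightInvOn (r := fun p => (p.1.1, p.1.2, p.2, (0 : ℝ)))
    (i := fun z => ((z.1, z.2.1), z.2.2.1)) (by fun_prop) (by fun_prop)
    (fun p hp => ⟨hp.1, hp.2, rfl⟩) (fun z hz => ⟨hz.1, hz.2.1⟩)
    fun z hz => Prod.ext rfl (Prod.ext rfl (Prod.ext rfl hz.2.2.symm))

end Pieces

namespace CylinderGluing

section ModelPieces

variable {T V W Y : Type} [TopologicalSpace T] [TopologicalSpace V] [TopologicalSpace W]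
  [NormedAddCommGroup Y] [NormedSpace ℝ Y] (d : CylinderGluing T V W Y) (L : Set V)

/-- The part of `base ∩ L` at nonnegative level. -/
def upperPart : Set V := d.base ∩ L ∩ {x | 0 ≤ d.level x}

/-- The part of `base ∩ L` at level at most `2`. -/
def lowerPart : Set V := d.base ∩ L ∩ {x | d.level x ≤ 2}

/-- The part of the model over `upperPart` at height `0`. -/
def floor : Set (V × W × Y × ℝ) := slab (d.oldModel ∩ Prod.fst ⁻¹' d.upperPart L) d.disk

/-- The part with given heights of the mapping cylinder of `attach`. -/
def wall (R : Set ℝ) : Set (V × W × Y × ℝ) :=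
  graphCylinder d.fiber d.attach (d.upperPart L ∩ {x | d.level x ≤ 2}) R

/-- The part of the model over `lowerPart` at height `1`. -/
def roof : Set (V × W × Y × ℝ) := graphCylinder d.fiber d.attach (d.lowerPart L) {1}

theorem model_inter_preimage_fst :
    d.model ∩ Prod.fst ⁻¹' L = d.floor L ∪ d.wall L I ∪ d.roof L := by
  ext ⟨x, w, y, r⟩
  constructor
  · rintro ⟨⟨hx, hy, hr, h_old, h_level, h_graph⟩, hxL⟩
    rcases h_graph with r_eq | ⟨le_two, hy, hw⟩
    · have nonneg : 0 ≤ d.level x := h_level.resolve_right (r_eq.trans_ne zero_ne_one)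
      exact .inl (.inl ⟨⟨h_old nonneg, ⟨hx, hxL⟩, nonneg⟩, hy, r_eq⟩)
    · rcases h_level with nonneg | r_eq
      · exact .inl (.inr ⟨⟨⟨⟨hx, hxL⟩, nonneg⟩, le_two⟩, hy, hw, hr⟩)
      · exact .inr ⟨⟨⟨hx, hxL⟩, le_two⟩, hy, hw, r_eq⟩
  · rintro ((⟨⟨hw, ⟨hx, hxL⟩, nonneg⟩, hy, rfl⟩ | ⟨⟨⟨⟨hx, hxL⟩, nonneg⟩, le_two⟩, hy, hw, hr⟩) |
      ⟨⟨⟨hx, hxL⟩, le_two⟩, hy, hw, rfl⟩)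
    · exact ⟨d.oldModel_mem_model hx nonneg hw hy, hxL⟩
    · obtain rfl : w = d.attach (x, y) := hw
      exact ⟨d.attach_mem_model hx le_two hy hr (.inl nonneg), hxL⟩
    · obtain rfl : w = d.attach (x, y) := hw
      exact ⟨d.attach_mem_model hx le_two hy unitInterval.one_mem (.inr rfl), hxL⟩

theorem floor_inter_wall : d.floor L ∩ d.wall L I = d.wall L {0} := by
  ext ⟨x, w, y, r⟩
  constructor
  · rintro ⟨⟨-, -, r_eq⟩, hx, hy, hw, -⟩
    exact ⟨hx, hy, hw, r_eq⟩
  · rintro ⟨hx, hy, hw, rfl⟩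
    obtain rfl : w = d.attach (x, y) := hw
    exact ⟨⟨⟨d.attach_mem_oldModel hx.1.1.1 hx.1.2 hx.2 hy, hx.1⟩, d.fiber_subset hy, rfl⟩, hx, hy,
      rfl, unitInterval.zero_mem⟩

theorem floor_union_wall_inter_roof : (d.floor L ∪ d.wall L I) ∩ d.roof L = d.wall L {1} := by
  ext ⟨x, w, y, r⟩
  constructor
  · rintro ⟨⟨-, -, r_eq_zero⟩ | ⟨hx, hy, hw, -⟩, -, -, -, r_eq_one⟩
    · exact absurd (r_eq_zero.symm.trans r_eq_one) zero_ne_one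
    · exact ⟨hx, hy, hw, r_eq_one⟩
  · rintro ⟨hx, hy, hw, rfl⟩
    exact ⟨.inr ⟨hx, hy, hw, unitInterval.one_mem⟩, ⟨hx.1.1, hx.2⟩, hy, hw, rfl⟩

end ModelPieces

variable {T V W Y : Type} [TopologicalSpace T] [NormedAddCommGroup V] [NormedSpace ℝ V]
  [FiniteDimensional ℝ V] [TopologicalSpace W] [T2Space W] [NormedAddCommGroup Y] [NormedSpace ℝ Y]
  [FiniteDimensional ℝ Y] {d : CylinderGluing T V W Y} {L : Set V}

theorem isCompact_isANE_model_inter (hbase : IsFiniteConvexUnion d.base)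
    (hlevel : IsConvexCutFunction d.level) (hfiber : IsCompact d.fiber)
    (hfiber' : IsANE d.fiber) (hdisk : IsCompact d.disk) (hold : IsCompact d.oldModel)
    (hold' : ∀ L, IsFiniteConvexUnion L → IsANE (d.oldModel ∩ Prod.fst ⁻¹' L))
    (hL : IsFiniteConvexUnion L) :
    IsCompact (d.model ∩ Prod.fst ⁻¹' L) ∧ IsANE (d.model ∩ Prod.fst ⁻¹' L) := by
  have hupper : IsFiniteConvexUnion (d.upperPart L) := hlevel.inter_ge _ 0 (hbase.inter hL)
  have hlower : IsFiniteConvexUnion (d.lowerPart L) := hlevel.inter_le _ 2 (hbase.inter hL)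
  have hband := hlevel.inter_le _ 2 hupper
  have wall_isANE : ∀ R : Set ℝ, IsClosed R → Convex ℝ R → IsANE (d.wall L R) := fun R hR hconv =>
    isANE_graphCylinder d.attach.continuous hband.isANE hfiber' (.of_convex hR hconv)
  have floor_isCompact : IsCompact (d.floor L) := isCompact_slab
    (hold.inter_right (hupper.isCompact.isClosed.preimage continuous_fst)) hdisk
  have wall_isCompact : IsCompact (d.wall L I) :=
    isCompact_graphCylinder d.attach.continuous hband.isCompact hfiber isCompact_Icc
  have roof_isCompact : IsCompact (d.roof L) :=
    isCompact_graphCylinder d.attach.continuous hlower.isCompact hfiber isCompact_singleton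
  have floor_isANE : IsANE (d.floor L) :=
    isANE_slab (hold' _ hupper) (.of_convex hdisk.isClosed d.convex_disk)
  have roof_isANE : IsANE (d.roof L) := isANE_graphCylinder d.attach.continuous hlower.isANE
    hfiber' (.of_convex isClosed_singleton (convex_singleton _))
  have floor_wall_isANE : IsANE (d.floor L ∪ d.wall L I) :=
    .union floor_isCompact.isClosed wall_isCompact.isClosed floor_isANE
      (wall_isANE _ isClosed_Icc (convex_Icc _ _))
      (d.floor_inter_wall L ▸ wall_isANE _ isClosed_singleton (convex_singleton _))
  rw [model_inter_preimage_fst]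
  exact ⟨(floor_isCompact.union wall_isCompact).union roof_isCompact,
    .union (floor_isCompact.union wall_isCompact).isClosed roof_isCompact.isClosed floor_wall_isANE
      roof_isANE
      (d.floor_union_wall_inter_roof L ▸ wall_isANE _ isClosed_singleton (convex_singleton _))⟩

end CylinderGluing

theorem exists_attaching_map {T V Y W : Type} [TopologicalSpace T] [NormedAddCommGroup V]
    [NormedAddCommGroup Y] [NormedAddCommGroup W] [NormedSpace ℝ W] [FiniteDimensional ℝ W]
    {q : C(T, V)} {L₁ K : Set V} {F : Set Y}
    {E₁ : Set (V × W)} (φ₁ : C({a // q a ∈ L₁}, E₁)) {u : C(K × F, {a // q a ∈ K})}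
    {X : Set (V × Y)} (hX : IsClosed X) (X_fst : ∀ z ∈ X, z.1 ∈ K) (X_snd : ∀ z ∈ X, z.2 ∈ F)
    (hu : ∀ z ∈ X, ∀ h₁ h₂, q (u (⟨z.1, h₁⟩, ⟨z.2, h₂⟩)).1 ∈ L₁) :
    ∃ g : C(V × Y, W), ∀ (z : K × F) (hz : q (u z).1 ∈ L₁), (z.1.1, z.2.1) ∈ X →
      g (z.1.1, z.2.1) = (φ₁ ⟨(u z).1, hz⟩).1.2 := by
  let lift : C(X, K × F) := ⟨fun z => (⟨z.1.1, X_fst _ z.2⟩, ⟨z.1.2, X_snd _ z.2⟩), by fun_prop⟩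
  have : TietzeExtension.{0, 0} W := TietzeExtension.of_tvs ℝ
  obtain ⟨g, g_restrict⟩ := ContinuousMap.exists_restrict_eq hX
    (⟨fun z => (φ₁ ⟨(u (lift z)).1, hu _ z.2 _ _⟩).1.2, by fun_prop⟩ : C(X, W))
  exact ⟨g, fun z _ hz => DFunLike.congr_fun g_restrict ⟨(z.1.1, z.2.1), hz⟩⟩

section CompactModel

variable {T V : Type} [TopologicalSpace T] [NormedAddCommGroup V] [NormedSpace ℝ V]

/-- Over `L`, the map `q` is fiber homotopy equivalent to the projection of a compact set
`E ⊆ V × W`, with `W` finite-dimensional, whose part over every finite union of compact convex sets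
is an absolute neighborhood extensor. -/
def HasCompactModel (q : C(T, V)) (L : Set V) : Prop :=
  ∃ (W : Type) (_ : NormedAddCommGroup W) (_ : NormedSpace ℝ W) (_ : FiniteDimensional ℝ W)
    (E : Set (V × W)), IsCompact E ∧ (∀ z ∈ E, z.1 ∈ L) ∧
    (∀ L', IsFiniteConvexUnion L' → IsANE (E ∩ Prod.fst ⁻¹' L')) ∧
    ∃ φ : C({a // q a ∈ L}, E), IsFiberHomotopyEquiv (fun a => q a.1) (fun z => z.1.1) φ

theorem hasCompactModel_empty (q : C(T, V)) : HasCompactModel q ∅ := by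
  have : IsEmpty {a // q a ∈ (∅ : Set V)} := ⟨fun a => a.2⟩
  have : IsEmpty (∅ : Set (V × ℝ)) := ⟨fun a => a.2⟩
  refine ⟨ℝ, inferInstance, inferInstance, inferInstance, ∅, isCompact_empty, by simp,
    fun L' _ => (Set.empty_inter _).symm ▸ IsANE.empty,
    ⟨isEmptyElim, continuous_of_const isEmptyElim⟩, .of_inverse
      ⟨isEmptyElim, continuous_of_const isEmptyElim⟩ isEmptyElim isEmptyElim isEmptyElim⟩

variable [FiniteDimensional ℝ V]

theorem HasCompactModel.extend {q : C(T, V)} {L₁ L K : Set V} (hL : IsFiniteConvexUnion L)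
    (hL₁ : L₁ ⊆ L) {l : V → ℝ} (hl : IsConvexCutFunction l) (h_upper : ∀ x ∈ L, 0 ≤ l x → x ∈ L₁)
    (h_lower : ∀ x ∈ L, l x ≤ 2 → x ∈ K) {Y : Type} [NormedAddCommGroup Y] [NormedSpace ℝ Y]
    [FiniteDimensional ℝ Y] {F : Set Y} (hF : IsCompact F) (hF' : IsANE F)
    {u : C(K × F, {a // q a ∈ K})}
    (hu : IsFiberHomotopyEquiv (fun z => z.1.1) (fun a => q a.1) u) (h : HasCompactModel q L₁) :
    HasCompactModel q L := by
  obtain ⟨W, _, _, _, E₁, hE₁, E₁_fst, E₁_isANE, φ₁, hφ₁⟩ := h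
  obtain ⟨v, v_fst, vu, uv⟩ := hu.exists_inverse
  obtain ⟨η, η_zero, η_one, η_fst⟩ := uv.symm
  obtain ⟨R, R_pos, hR⟩ := hF.isBounded.subset_closedBall_lt 0 (0 : Y)
  have band_isCompact := (hl.inter_le _ 2 (hl.inter_ge _ 0 hL)).isCompact
  obtain ⟨g, attach_eq⟩ := exists_attaching_map (u := u) φ₁ (band_isCompact.prod hF).isClosed
    (fun z hz => h_lower _ hz.1.1.1 hz.1.2) (fun z hz => hz.2) fun z hz h₁ h₂ => by
      rw [hu.map_eq]
      exact h_upper _ hz.1.1.1 hz.1.1.2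
  let d : CylinderGluing T V W Y :=
    { proj := q, oldBase := L₁, base := L, cell := K, level := ⟨l, hl.continuous⟩, fiber := F
      disk := Metric.closedBall 0 R, oldModel := E₁, oldMap := φ₁, chart := u, chartInv := v
      chartHomotopy := η, attach := g, oldBase_subset := hL₁, mem_oldBase := h_upper
      mem_cell := h_lower, oldModel_fst := E₁_fst, oldMap_equiv := hφ₁, chart_equiv := hu
      chartInv_equiv := ⟨v_fst, u, hu.map_eq, uv, vu⟩, chartHomotopy_zero := η_zero
      chartHomotopy_one := η_one, proj_chartHomotopy := η_fst
      attach_eq := fun z hz mem nonneg le_two => attach_eq z hz ⟨⟨⟨mem, nonneg⟩, le_two⟩, z.2.2⟩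
      fiber_subset := hR, isClosed_fiber := hF.isClosed
      zero_mem_disk := Metric.mem_closedBall_self R_pos.le, convex_disk := convex_closedBall _ _ }
  have model_inter := fun L' => CylinderGluing.isCompact_isANE_model_inter (d := d) (L := L') hL hl
    hF hF' (isCompact_closedBall _ _) hE₁ E₁_isANE
  have model_inter_base : d.model ∩ Prod.fst ⁻¹' L = d.model := Set.inter_eq_left.2 fun z hz => hz.1
  exact ⟨W × Y × ℝ, inferInstance, inferInstance, inferInstance, d.model,
    model_inter_base ▸ (model_inter L hL).1, fun z hz => hz.1,
    fun L' hL' => (model_inter L' hL').2, d.modelMap, d.isFiberHomotopyEquiv_modelMap⟩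

end CompactModel

theorem IsANE.exists_closedBall_inter_contractible {V : Type} [NormedAddCommGroup V]
    [NormedSpace ℝ V] {S : Set V} (hS : IsANE S) (hSclosed : IsClosed S) {c : V} (hc : c ∈ S) :
    ∃ ε > 0, Nonempty ((ContinuousMap.inclusion
      (Set.inter_subset_left : S ∩ Metric.closedBall c ε ⊆ S)).Homotopy (.const _ ⟨c, hc⟩)) := by
  obtain ⟨O, r, hO, S_subset, r_continuous, r_mapsTo, r_eq⟩ :=
    hS V S id hSclosed continuousOn_id fun _ hx => hx
  obtain ⟨ε, ε_pos, ball_subset⟩ :=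
    Metric.nhds_basis_closedBall.mem_iff.1 (hO.mem_nhds (S_subset hc))
  let segment : C(I × ↥(S ∩ Metric.closedBall c ε), V) :=
    ⟨fun z => AffineMap.lineMap z.2.1 c (z.1 : ℝ), by
      simp only [AffineMap.lineMap_apply_module]
      fun_prop⟩
  have segment_mem : ∀ z, segment z ∈ O := fun z => ball_subset <|
    (convex_closedBall c ε).lineMap_mem z.2.2.2 (Metric.mem_closedBall_self ε_pos.le) z.1.2
  have r_segment : Continuous fun z => r (segment z) :=
    r_continuous.comp_continuous segment.continuous segment_mem
  refine ⟨ε, ε_pos, ⟨⟨fun z => ⟨r (segment z), r_mapsTo (segment_mem z)⟩, r_segment.subtype_mk _⟩,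
    fun x => Subtype.ext ?_, fun x => Subtype.ext ?_⟩⟩
  · change r (segment (0, x)) = x
    simpa [segment] using r_eq x.2.1
  · simpa [segment] using r_eq hc

section FibrationOverConvexUnion

variable {T : Type} [TopologicalSpace T] {n : ℕ} {S : Set (Fin n → ℝ)} {π : C(T, S)}

theorem exists_local_trivialization (hπ : IsHurewiczFibration π) (hS : IsFiniteConvexUnion S)
    {c : Fin n → ℝ} (hc : c ∈ S) (hfib : HomotopyEquivToFiniteComplex {a // π a = ⟨c, hc⟩}) :
    ∃ ε > 0, ∃ (m : ℕ) (F : Set (Fin m → ℝ)), IsFiniteConvexUnion F ∧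
      ∃ u : C(↥(S ∩ Metric.closedBall c ε) × F,
          {a // (π a : Fin n → ℝ) ∈ S ∩ Metric.closedBall c ε}),
        IsFiberHomotopyEquiv (fun z => z.1.1) (fun a => (π a.1).1) u := by
  obtain ⟨ε, ε_pos, ⟨h⟩⟩ := hS.isANE.exists_closedBall_inter_contractible hS.isCompact.isClosed hc
  obtain ⟨m, L, L_finite, ⟨e⟩⟩ := hfib
  exact ⟨ε, ε_pos, m, L.space, .simplicialComplex_space L_finite,
    exists_trivialization_of_homotopy_const hπ Set.inter_subset_left h e.symm⟩

theorem HasCompactModel.union_closedBall {q : C(T, Fin n → ℝ)} {c : Fin n → ℝ}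
    {L₁ : Set (Fin n → ℝ)} (hS : IsFiniteConvexUnion S) (hL₁ : IsFiniteConvexUnion L₁)
    (hL₁S : L₁ ⊆ S) {ε : ℝ} (hε : 0 < ε)
    {m : ℕ} {F : Set (Fin m → ℝ)} (hF : IsFiniteConvexUnion F)
    {u : C(↥(S ∩ Metric.closedBall c ε) × F, {a // q a ∈ S ∩ Metric.closedBall c ε})}
    (hu : IsFiberHomotopyEquiv (fun z => z.1.1) (fun a => q a.1) u) (h : HasCompactModel q L₁) :
    HasCompactModel q (S ∩ Metric.closedBall c (ε / 2) ∪ L₁) := by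
  -- The level runs from `0` to `2` as the distance to `c` runs from `3ε/4` to `ε`.
  have level_isConvexCut := (isConvexCutFunction_norm_sub c).sub_mul (3 * ε / 4)
    (k := 8 / ε) (by positivity)
  refine .extend ((hS.inter_convex Metric.isClosed_closedBall (convex_closedBall _ _)).union hL₁)
    Set.subset_union_right level_isConvexCut ?_ ?_ hF.isCompact hF.isANE hu h
  · rintro x (⟨-, near⟩ | hx) level_nonneg
    · rw [mem_closedBall_iff_norm] at near
      have := nonneg_of_mul_nonneg_left level_nonneg (by positivity : 0 < 8 / ε)
      linarith
    · exact hx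
  · intro x hx level_le
    have dist_le : ‖x - c‖ - 3 * ε / 4 ≤ 2 / (8 / ε) := by rwa [le_div_iff₀ (by positivity)]
    rw [div_div_eq_mul_div] at dist_le
    exact ⟨hx.elim And.left (@hL₁S x), mem_closedBall_iff_norm.2 (by linarith)⟩

theorem IsHurewiczFibration.hasCompactModel (hπ : IsHurewiczFibration π)
    (hS : IsFiniteConvexUnion S) (hfib : ∀ b, HomotopyEquivToFiniteComplex {a // π a = b}) :
    HasCompactModel ((⟨Subtype.val, continuous_subtype_val⟩ : C(S, Fin n → ℝ)).comp π) S := by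
  classical
  have local_triv := fun (c : Fin n → ℝ) (hc : c ∈ S) =>
    exists_local_trivialization hπ hS hc (hfib ⟨c, hc⟩)
  choose! ε ε_pos m F hF u hu using local_triv
  let ball := fun c : Fin n → ℝ => S ∩ Metric.closedBall c (ε c / 2)
  have ball_isFiniteConvexUnion : ∀ c, IsFiniteConvexUnion (ball c) := fun c =>
    hS.inter_convex Metric.isClosed_closedBall (convex_closedBall _ _)
  have hasCompactModel_biUnion : ∀ s : Finset (Fin n → ℝ), (∀ c ∈ s, c ∈ S) →
      HasCompactModel (.comp ⟨Subtype.val, continuous_subtype_val⟩ π) (⋃ c ∈ s, ball c) := by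
    intro s
    induction s using Finset.induction_on with
    | empty =>
      simp only [Finset.notMem_empty, Set.iUnion_of_empty, Set.iUnion_empty]
      exact fun _ => hasCompactModel_empty _
    | insert c s _ ih =>
      intro hs
      have hc := hs c (Finset.mem_insert_self c s)
      rw [Finset.set_biUnion_insert]
      exact .union_closedBall hS (.biUnion s fun c _ => ball_isFiniteConvexUnion c)
        (Set.iUnion₂_subset fun c _ => Set.inter_subset_left) (ε_pos c hc) (hF c hc) (hu c hc)
        (ih fun c hc => hs c (Finset.mem_insert_of_mem hc))
  obtain ⟨s, hs, S_subset⟩ := hS.isCompact.elim_nhds_subcover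
    (fun c => Metric.closedBall c (ε c / 2))
    fun c hc => Metric.closedBall_mem_nhds c (half_pos (ε_pos c hc))
  have biUnion_eq : ⋃ c ∈ s, ball c = S := by
    rw [← Set.inter_iUnion₂]
    exact Set.inter_eq_left.2 S_subset
  simpa only [biUnion_eq] using hasCompactModel_biUnion s hs

end FibrationOverConvexUnion

/-! ### Approximate fibrations -/

section ApproxFibration

theorem exists_modulus_at_zero {X B : Type*} [TopologicalSpace X] [PseudoMetricSpace B]
    (h : C(X × I, B)) {ε : ℝ} (hε : 0 < ε) :
    ∃ δ : C(X, ℝ), (∀ x, 0 < δ x) ∧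
      ∀ x (t : I), (t : ℝ) < δ x → dist (h (x, t)) (h (x, 0)) < ε := by
  let slack : X → I → ℝ := fun x t => max (t : ℝ) (ε - dist (h (x, t)) (h (x, 0)))
  have slack_continuous : Continuous (Function.uncurry slack) := by
    change Continuous fun z : X × I => max (z.2 : ℝ) (ε - dist (h z) (h (z.1, 0)))
    fun_prop
  have image_isCompact : ∀ x, IsCompact (slack x '' Set.univ) := fun x =>
    isCompact_univ.image (slack_continuous.uncurry_left x)
  refine ⟨⟨fun x => sInf (slack x '' Set.univ), isCompact_univ.continuous_sInf slack_continuous⟩,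
    fun x => ?_, fun x t ht => ?_⟩
  · obtain ⟨t, -, slack_eq⟩ := (image_isCompact x).sInf_mem ⟨_, 0, trivial, rfl⟩
    change 0 < sInf _
    rw [← slack_eq]
    rcases eq_or_ne t 0 with rfl | t_ne_zero
    · simp [slack, hε]
    · exact lt_max_of_lt_left (unitInterval.pos_iff_ne_zero.2 t_ne_zero)
  · have lt_slack : (t : ℝ) < slack x t :=
      ht.trans_le (csInf_le (image_isCompact x).bddBelow ⟨t, trivial, rfl⟩)
    linarith [(lt_max_iff.1 lt_slack).resolve_left (lt_irrefl _), t.2.1]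

theorem exists_concat_within {X E : Type*} [TopologicalSpace X] [TopologicalSpace E]
    {a b : C(X × I, E)} (a_one : ∀ x, a (x, 1) = b (x, 0)) {δ : C(X, ℝ)} (hδ : ∀ x, 0 < δ x) :
    ∃ H : C(X × I, E), (∀ x, H (x, 0) = a (x, 0)) ∧
      (∀ x (t : I), (t : ℝ) ≤ δ x → ∃ s, H (x, t) = a (x, s)) ∧
      (∀ x (t : I), δ x ≤ (t : ℝ) → ∃ s ≤ t, H (x, t) = b (x, s)) ∧
      ∀ x (t : I), 2 * δ x ≤ (t : ℝ) → H (x, t) = b (x, t) := by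
  let ratio : C(X × I, ℝ) :=
    ⟨fun z => z.2 / δ z.1, .div (by fun_prop) (by fun_prop) fun z => (hδ z.1).ne'⟩
  let H : C(X × I, E) := glueLE ⟨fun z => (z.2 : ℝ), by fun_prop⟩ (δ.comp ContinuousMap.fst)
    ⟨fun z => a (z.1.1, clamp (ratio z.1)), by fun_prop⟩
    ⟨fun z => b (z.1.1, clamp (min (z.1.2 : ℝ) (2 * (z.1.2 - δ z.1.1)))), by fun_prop⟩ (by
      rintro ⟨x, t⟩ (t_eq : (t : ℝ) = δ x)
      simp [ratio, t_eq, div_self (hδ x).ne', (hδ x).le, a_one])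
  have H_left : ∀ x (t : I), (t : ℝ) ≤ δ x → H (x, t) = a (x, clamp (ratio (x, t))) := fun x t h =>
    glueLE_left (a := ⟨fun z : X × I => (z.2 : ℝ), by fun_prop⟩)
      (b := δ.comp ContinuousMap.fst) (x := (x, t)) h
  have H_right : ∀ x (t : I), δ x ≤ (t : ℝ) →
      H (x, t) = b (x, clamp (min (t : ℝ) (2 * (t - δ x)))) := fun x t h =>
    glueLE_right (a := ⟨fun z : X × I => (z.2 : ℝ), by fun_prop⟩)
      (b := δ.comp ContinuousMap.fst) (x := (x, t)) h
  refine ⟨H, fun x => ?_, fun x t h => ⟨_, H_left x t h⟩,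
    fun x t h => ⟨_, ?_, H_right x t h⟩, fun x t h => ?_⟩
  · rw [H_left x 0 (hδ x).le]
    simp [ratio]
  · calc clamp (min (t : ℝ) (2 * (t - δ x))) ≤ clamp t :=
          Set.monotone_projIcc zero_le_one (min_le_left _ _)
      _ = t := clamp_coe t
  · rw [H_right x t (by linarith [hδ x]), min_eq_left (by linarith), clamp_coe]

variable {T E B : Type} [TopologicalSpace T] [TopologicalSpace E] [TopologicalSpace B]

-- Lift the homotopy through the inverse `E → T` and push the lift forward to `E`. This starts at
-- `φ ∘ ψ ∘ f` rather than at `f`, but the vertical homotopy between the two can be prepended in so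
-- short a time that the given homotopy has not yet moved by more than a Lebesgue number.
theorem IsFiberHomotopyEquiv.isApproxFibration [CompactSpace B]
    [TopologicalSpace.MetrizableSpace B] {π : C(T, B)} {p : C(E, B)} {φ : C(T, E)}
    (hφ : IsFiberHomotopyEquiv π p φ) (hπ : IsHurewiczFibration π) : IsApproxFibration p := by
  let _ := TopologicalSpace.metrizableSpaceMetric B
  refine ⟨p.continuous, fun X _ f h h_zero 𝒰 𝒰_isOpen 𝒰_cover => ?_⟩
  obtain ⟨p_φ, ψ, π_ψ, -, φψ⟩ := hφ
  obtain ⟨K, K_zero, K_one, p_K⟩ := φψ.symm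
  obtain ⟨G, G_zero, π_G⟩ := hπ.2 X (ψ.comp f) h fun x => (h_zero x).trans (π_ψ _).symm
  obtain ⟨ε, ε_pos, lebesgue⟩ :=
    lebesgue_number_lemma_of_metric_sUnion (isCompact_univ (X := B)) 𝒰_isOpen 𝒰_cover.ge
  obtain ⟨δ, δ_pos, h_near⟩ := exists_modulus_at_zero h ε_pos
  obtain ⟨H, H_zero, H_early, H_middle, H_late⟩ := exists_concat_within
    (a := K.comp (f.prodMap (.id I))) (b := φ.comp G) (δ := ⟨fun x => δ x / 2, by fun_prop⟩)
    (fun x => (K_one _).trans (congrArg φ (G_zero x).symm)) fun x => half_pos (δ_pos x)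
  refine ⟨H, fun x => (H_zero x).trans (K_zero _), fun ⟨x, t⟩ => ?_⟩
  rcases lt_or_ge (t : ℝ) (δ x) with t_lt | le_t
  · obtain ⟨U, hU, ball_subset⟩ := lebesgue (h (x, 0)) trivial
    refine ⟨U, hU, ball_subset ?_, ball_subset (h_near x t t_lt)⟩
    rcases le_total (t : ℝ) (δ x / 2) with t_le | le_t
    · obtain ⟨s, H_eq⟩ := H_early x t t_le
      have p_H : p (H (x, t)) = h (x, 0) := by
        rw [H_eq, h_zero]
        exact p_K _ _
      exact p_H ▸ Metric.mem_ball_self ε_pos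
    · obtain ⟨s, s_le, H_eq⟩ := H_middle x t le_t
      have p_H : p (H (x, t)) = h (x, s) := by
        rw [H_eq, ContinuousMap.comp_apply, p_φ, π_G]
      exact p_H ▸ h_near x s (lt_of_le_of_lt s_le t_lt)
  · obtain ⟨U, hU, ball_subset⟩ := lebesgue (h (x, t)) trivial
    have p_H : p (H (x, t)) = h (x, t) := by
      rw [H_late x t (by simpa [mul_div_cancel₀] using le_t), ContinuousMap.comp_apply, p_φ, π_G]
    have h_mem := ball_subset (Metric.mem_ball_self ε_pos)
    exact ⟨U, hU, p_H ▸ h_mem, h_mem⟩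

end ApproxFibration

section FiniteComplexBase

variable {T B : Type} [TopologicalSpace T] [TopologicalSpace B]

theorem IsFiniteSimplicialComplex.compactSpace (hB : IsFiniteSimplicialComplex B) :
    CompactSpace B := by
  obtain ⟨n, K, K_finite, ⟨e⟩⟩ := hB
  have := isCompact_iff_compactSpace.1
    (IsFiniteConvexUnion.simplicialComplex_space K_finite).isCompact
  exact e.symm.compactSpace

theorem IsFiniteSimplicialComplex.metrizableSpace (hB : IsFiniteSimplicialComplex B) :
    TopologicalSpace.MetrizableSpace B := by
  obtain ⟨n, K, -, ⟨e⟩⟩ := hB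
  exact e.isEmbedding.metrizableSpace

theorem HomotopyEquivToFiniteComplex.of_homeomorph {X Y : Type} [TopologicalSpace X]
    [TopologicalSpace Y] (hX : HomotopyEquivToFiniteComplex X) (e : X ≃ₜ Y) :
    HomotopyEquivToFiniteComplex Y := by
  obtain ⟨n, K, K_finite, ⟨w⟩⟩ := hX
  exact ⟨n, K, K_finite, ⟨e.symm.toHomotopyEquiv.trans w⟩⟩

theorem IsHurewiczFibration.homeomorph_comp {B' : Type} [TopologicalSpace B'] {π : T → B}
    (hπ : IsHurewiczFibration π) (e : B ≃ₜ B') : IsHurewiczFibration (e ∘ π) := by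
  refine ⟨e.continuous.comp hπ.1, fun X _ f h h_zero => ?_⟩
  obtain ⟨H, H_zero, π_H⟩ := hπ.2 X f ((e.symm : C(B', B)).comp h) fun x => by simp [h_zero]
  exact ⟨H, H_zero, fun z => by simp [π_H]⟩

theorem IsHurewiczFibration.exists_compact_ENR_model {π : C(T, B)} (hπ : IsHurewiczFibration π)
    (hB : IsFiniteSimplicialComplex B) (hfib : ∀ b, HomotopyEquivToFiniteComplex {a // π a = b}) :
    ∃ (E : Type) (_ : TopologicalSpace E), CompactSpace E ∧ IsENR E ∧
      ∃ (p : C(E, B)) (φ : C(T, E)), IsFiberHomotopyEquiv π p φ := by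
  obtain ⟨n, K, K_finite, ⟨e⟩⟩ := hB
  have K_convex := IsFiniteConvexUnion.simplicialComplex_space K_finite
  have fiber_homeomorph : ∀ s, Nonempty ({a // π a = e.symm s} ≃ₜ {a // e (π a) = s}) := fun s =>
    ⟨.setCongr (Set.ext fun a => e.toEquiv.eq_symm_apply)⟩
  obtain ⟨W, _, _, _, E, hE, E_fst, E_isANE, φ, hφ⟩ :=
    (hπ.homeomorph_comp e).hasCompactModel (π := (e : C(B, K.space)).comp π) K_convex
      fun s => (hfib (e.symm s)).of_homeomorph (fiber_homeomorph s).some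
  let ι : B → Fin n → ℝ := fun b => e b
  have ι_injective : ι.Injective := Subtype.val_injective.comp e.injective
  let p : C(E, B) := ⟨fun z => e.symm ⟨z.1.1, E_fst _ z.2⟩, by fun_prop⟩
  let toSubtype : C(T, {a // ι (π a) ∈ K.space}) := ⟨fun a => ⟨a, (e (π a)).2⟩, by fun_prop⟩
  have toSubtype_equiv : IsFiberHomotopyEquiv (fun a => ι (π a)) (fun a => ι (π a.1)) toSubtype :=
    .of_inverse ⟨Subtype.val, continuous_subtype_val⟩ (fun _ => rfl) (fun _ => rfl) fun _ => rfl
  have ι_p : (fun z => ι (p z)) = fun z : E => z.1.1 := funext fun z => by simp [ι, p]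
  have E_inter : E ∩ Prod.fst ⁻¹' K.space = E := Set.inter_eq_left.2 E_fst
  refine ⟨E, inferInstance, isCompact_iff_compactSpace.1 hE,
    (E_inter ▸ E_isANE _ K_convex).isENR hE.isClosed, p, φ.comp toSubtype,
    .of_comp_proj ι_injective ?_⟩
  rw [ι_p]
  exact hφ.comp toSubtype_equiv

end FiniteComplexBase

section MappingPathFibration

variable {A B : Type} [TopologicalSpace A] [TopologicalSpace B]

/-- The mapping path space of `f`, consisting of all pairs of a point `a` and a path in `B` starting
at `f a`: the case of the vertical path space in which every path is vertical. -/
abbrev MappingPathSpace (f : C(A, B)) : Type := VerticalPathSpace f fun _ => ()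

namespace MappingPathSpace

variable (f : C(A, B))

theorem isHurewiczFibration_target : IsHurewiczFibration (VerticalPathSpace.target f fun _ => ()) :=
  ⟨(VerticalPathSpace.target f _).continuous, fun X _ k h h_zero =>
    VerticalPathSpace.hasVerticalLifting_target X k h h_zero fun _ _ => rfl⟩

theorem isFiberHomotopyEquiv_const :
    IsFiberHomotopyEquiv (fun _ => ()) (fun _ => ()) (VerticalPathSpace.const f fun _ => ()) :=
  .of_comp_left (.of_inverse (.id A) (fun _ => rfl) (fun _ => rfl) fun _ => rfl)
    (VerticalPathSpace.isFiberHomotopyEquiv_source f fun _ => ())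

/-- The fiber of the mapping path fibration is the homotopy fiber. -/
def homotopyFiberHomeomorph (b : B) :
    HomotopyFiber f b ≃ₜ
      {z : MappingPathSpace f // VerticalPathSpace.target f (fun _ => ()) z = b} where
  toFun z := ⟨⟨z.1, z.2.1, fun _ => rfl⟩, z.2.2⟩
  invFun z := ⟨z.1.1, z.1.2.1, z.2⟩
  left_inv _ := rfl
  right_inv _ := rfl
  continuous_toFun := (continuous_subtype_val.subtype_mk _).subtype_mk _
  continuous_invFun := by
    refine Continuous.subtype_mk ?_ _
    exact continuous_subtype_val.comp continuous_subtype_val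

end MappingPathSpace

end MappingPathFibration

theorem map_factors_through_approx_fibration_with_compact_ENR_total_space
    (A B : Type) [TopologicalSpace A] [TopologicalSpace B]
    (f : A → B) (hf : Continuous f)
    (hB : IsFiniteSimplicialComplex B)
    (hfib : ∀ b : B, HomotopyEquivToFiniteComplex (HomotopyFiber f b)) :
    ∃ (E : Type) (_ : TopologicalSpace E), CompactSpace E ∧ IsENR E ∧
      ∃ (φ : ContinuousMap.HomotopyEquiv A E) (p : E → B),
        IsApproxFibration p ∧ ∀ a : A, p (φ.toFun a) = f a := by
  lift f to C(A, B) using hf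
  have := hB.compactSpace
  have := hB.metrizableSpace
  have target_isFibration := MappingPathSpace.isHurewiczFibration_target f
  obtain ⟨E, _, E_compact, E_isENR, p, χ, hχ⟩ := target_isFibration.exists_compact_ENR_model hB
    fun b => (hfib b).of_homeomorph (MappingPathSpace.homotopyFiberHomeomorph f b)
  obtain ⟨inclusion, inclusion_eq⟩ :=
    (MappingPathSpace.isFiberHomotopyEquiv_const f).exists_homotopyEquiv
  obtain ⟨model, model_eq⟩ := hχ.exists_homotopyEquiv
  refine ⟨E, inferInstance, E_compact, E_isENR, inclusion.trans model, p,
    hχ.isApproxFibration target_isFibration, fun a => ?_⟩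
  change p (model.toFun (inclusion.toFun a)) = f a
  rw [model_eq, inclusion_eq, hχ.map_eq]
  rfl

end
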